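/- Let U ∈ C⁶(ℝ^d) satisfy U(0) = 0, U(z) ≥ (λ/2)|z|² for all z ∈ ℝ^d for some λ > 0, and sup_{ℝ^d}|D^k U| < ∞ for 3 ≤ k ≤ 6, and let F ∈ W^{4,∞}(ℝ^d), i.e. F ∈ C⁴(ℝ^d) with sup_{ℝ^d}|D^k F| < ∞ for 0 ≤ k ≤ 4. Then there exists C > 0 such that for all ε > 0: | (2πε)^{-d/2} ∫_{ℝ^d} e^{-U(z)/ε} F(z) dz − (det[U_{ij}])^{-1/2} [ F + ε( (1/2) U^{ij} ∂_{ij} F − (1/2) ∂_i F · U_{jkℓ} U^{ij} U^{kℓ} + F( −(1/8) U_{ijkℓ} U^{ij} U^{kℓ} + (1/12) U_{ijk} U_{ℓmn} U^{iℓ} U^{jm} U^{kn} + (1/8) U_{ijk} U_{ℓmn} U^{ij} U^{kℓ} U^{mn} ) ) ] | ≤ C ε², where F and all derivatives of U and F on the left are evaluated at z = 0. -/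

import Mathlib

/-!
Substituting `z = √ε x` and writing `t = √ε`, the normalised integral becomes
`(2π)^{-d/2} ∫ e^{-U(tx)/t²} F(tx) dx`. Since `0` is the minimum of `U`, the linear Taylor term
vanishes, so `U(tx)/t² = ⟨Hx, x⟩/2 + w` with `H` the Hessian of `U` at `0` and `w = O(t)` with
coefficients of polynomial growth in `x`.

For `t ≤ 1`, expanding `e^{-w}` to third order and multiplying by the Taylor polynomial of `F`
(`exp_mul_expansion`, `integrand_expansion`) gives
`e^{-U(tx)/t²} F(tx) = e^{-⟨Hx,x⟩/2} (F(0) + t A₁ + t² A₂ + t³ A₃) + O(t⁴)`.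
The remainder is uniformly bounded by a polynomial times `e^{-λ|x|²/2}`, because both
`e^{-⟨Hx,x⟩/2}` and `e^{-U(tx)/t²}` are at most `e^{-λ|x|²/2}`; the bound for the former comes from
letting `t → 0` in the lower bound on `U` (`hess_lower`).

The polynomials `A₁` and `A₃` are odd, so they integrate to zero against the Gaussian (`gE_odd`).
The Gaussian average of `A₂` is computed from the moments of order two, four and six, which follow
from Gaussian integration by parts (`gauss_ibp`, Isserlis' theorem); symmetry of the derivative
tensors turns the result into `lap1` (`gE_coeff2`). The normalisation is the Gaussian integral
`gauss_integral`. For `ε ≥ 1` both sides are bounded by a multiple of `1 + ε ≤ 2 ε²`.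
-/

open MeasureTheory Real

noncomputable section

abbrev Euc (d : ℕ) := EuclideanSpace ℝ (Fin d)

/-- Iterated partial derivative `∂_{m 0} ⋯ ∂_{m (k-1)} f (x)`. -/
noncomputable def pd {d : ℕ} (k : ℕ) (f : Euc d → ℝ) (x : Euc d) (m : Fin k → Fin d) : ℝ :=
  iteratedFDeriv ℝ k f x fun a => EuclideanSpace.single (m a) (1 : ℝ)

/-- `|D^k f|(x) = ∑_{|α| = k} |∂^α f (x)|` (sum over ordered index tuples). -/
noncomputable def Dnorm {d : ℕ} (k : ℕ) (f : Euc d → ℝ) (x : Euc d) : ℝ :=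
  ∑ m : Fin k → Fin d, |pd k f x m|

/-- `|D^{≤k} f|(x) = ∑_{j=0}^{k} |D^j f|(x)`. -/
noncomputable def DnormLe {d : ℕ} (k : ℕ) (f : Euc d → ℝ) (x : Euc d) : ℝ :=
  ∑ j ∈ Finset.range (k + 1), Dnorm j f x

/-- The kernel `K(z) = e^{-|z|²/4} / |z|^{d-1}`. -/
noncomputable def Kker {d : ℕ} (z : Euc d) : ℝ :=
  Real.exp (-‖z‖ ^ 2 / 4) / ‖z‖ ^ (d - 1)

/-- The rescaled kernel `K_τ(z) = τ^{-d/2} K(z/√τ)`. -/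
noncomputable def Kt {d : ℕ} (τ : ℝ) (z : Euc d) : ℝ :=
  τ ^ (-(d : ℝ) / 2) * Kker ((Real.sqrt τ)⁻¹ • z)

/-- Convolution `(K_τ * φ)(x) = ∫ φ(x - z) K_τ(z) dz`. -/
noncomputable def Kconv {d : ℕ} (τ : ℝ) (φ : Euc d → ℝ) (x : Euc d) : ℝ :=
  ∫ z, φ (x - z) * Kt τ z

/-- Hessian matrix `[∂_{ij} f (x)]`. -/
noncomputable def hess {d : ℕ} (f : Euc d → ℝ) (x : Euc d) : Matrix (Fin d) (Fin d) ℝ :=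
  Matrix.of fun i j => pd 2 f x ![i, j]

/-- The first-order coefficient in the Laplace expansion:
`(1/2) u^{ij} ∂_{ij} r − (1/2) u_{jkℓ} u^{ij} u^{kℓ} ∂_i r
 + (1/8) r u_{ijk} u_{ℓmn} u^{ij} u^{kℓ} u^{mn}
 + (1/12) r u_{ijk} u_{ℓmn} u^{iℓ} u^{jm} u^{kn} − (1/8) r u_{ijkℓ} u^{ij} u^{kℓ}`. -/
noncomputable def lap1 {d : ℕ} (u r : Euc d → ℝ) (xs : Euc d) : ℝ :=
  (1 / 2) * (∑ i : Fin d, ∑ j : Fin d, (hess u xs)⁻¹ i j * pd 2 r xs ![i, j])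
    - (1 / 2) * (∑ i : Fin d, ∑ j : Fin d, ∑ k : Fin d, ∑ l : Fin d,
        pd 3 u xs ![j, k, l] * (hess u xs)⁻¹ i j * (hess u xs)⁻¹ k l * pd 1 r xs ![i])
    + (1 / 8) * r xs * (∑ i : Fin d, ∑ j : Fin d, ∑ k : Fin d, ∑ l : Fin d, ∑ m : Fin d,
        ∑ n : Fin d, pd 3 u xs ![i, j, k] * pd 3 u xs ![l, m, n] *
          (hess u xs)⁻¹ i j * (hess u xs)⁻¹ k l * (hess u xs)⁻¹ m n)
    + (1 / 12) * r xs * (∑ i : Fin d, ∑ j : Fin d, ∑ k : Fin d, ∑ l : Fin d, ∑ m : Fin d,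
        ∑ n : Fin d, pd 3 u xs ![i, j, k] * pd 3 u xs ![l, m, n] *
          (hess u xs)⁻¹ i l * (hess u xs)⁻¹ j m * (hess u xs)⁻¹ k n)
    - (1 / 8) * r xs * (∑ i : Fin d, ∑ j : Fin d, ∑ k : Fin d, ∑ l : Fin d,
        pd 4 u xs ![i, j, k, l] * (hess u xs)⁻¹ i j * (hess u xs)⁻¹ k l)

/-! ### Taylor expansion along rays and symmetry of derivatives -/

/-- The homogeneous Taylor form `D^k f(0)[x, …, x]`. -/
def dform {d : ℕ} (k : ℕ) (f : Euc d → ℝ) (x : Euc d) : ℝ :=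
  iteratedFDeriv ℝ k f 0 fun _ => x

lemma pd_expand {d : ℕ} (k : ℕ) (f : Euc d → ℝ) (y x : Euc d) :
    iteratedFDeriv ℝ k f y (fun _ => x) = ∑ m : Fin k → Fin d, (∏ a, x (m a)) * pd k f y m := by
  have hx : x = ∑ i, x i • EuclideanSpace.single i (1 : ℝ) := by
    have := (EuclideanSpace.basisFun (Fin d) ℝ).sum_repr x
    simpa using this.symm
  conv_lhs => rw [hx]
  rw [ContinuousMultilinearMap.map_sum]
  refine Finset.sum_congr rfl fun m _ => ?_
  rw [ContinuousMultilinearMap.map_smul_univ]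
  rfl

lemma abs_iteratedFDeriv_diag_le {d : ℕ} (k : ℕ) (f : Euc d → ℝ) (y x : Euc d) :
    |iteratedFDeriv ℝ k f y (fun _ => x)| ≤ Dnorm k f y * ‖x‖ ^ k := by
  rw [pd_expand, Dnorm, Finset.sum_mul]
  refine (Finset.abs_sum_le_sum_abs _ _).trans (Finset.sum_le_sum fun m _ => ?_)
  rw [abs_mul, mul_comm, Finset.abs_prod]
  refine mul_le_mul_of_nonneg_left ?_ (abs_nonneg _)
  calc ∏ a, |x (m a)| ≤ ∏ _a : Fin k, ‖x‖ :=
        Finset.prod_le_prod (fun _ _ => abs_nonneg _) fun a _ => PiLp.norm_apply_le x (m a)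
    _ = ‖x‖ ^ k := by simp

lemma iteratedDeriv_ray {d n : ℕ} {f : Euc d → ℝ} (hf : ContDiff ℝ n f) (x : Euc d) (s : ℝ)
    {k : ℕ} (hk : k ≤ n) :
    iteratedDeriv k (fun s : ℝ => f (s • x)) s = iteratedFDeriv ℝ k f (s • x) fun _ => x := by
  have h := ContinuousLinearMap.iteratedFDeriv_comp_right
    ((ContinuousLinearMap.id ℝ ℝ).smulRight x) hf s (i := k) (by exact_mod_cast hk)
  have h2 : (f ∘ ((ContinuousLinearMap.id ℝ ℝ).smulRight x)) = fun s : ℝ => f (s • x) := by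
    ext s; simp
  rw [h2] at h
  rw [iteratedDeriv_eq_iteratedFDeriv, h]
  simp

/-- Taylor's formula along the ray through `x`, with Lagrange remainder. -/
lemma taylor_ray {d n : ℕ} {f : Euc d → ℝ} (hf : ContDiff ℝ (n + 1 : ℕ) f) {M : ℝ}
    (hM : ∀ y, Dnorm (n + 1) f y ≤ M) (x : Euc d) {t : ℝ} (ht : 0 < t) :
    ∃ r : ℝ, |r| ≤ M * ‖x‖ ^ (n + 1) ∧
      f (t • x) = (∑ k ∈ Finset.range (n + 1), t ^ k / (k.factorial : ℝ) * dform k f x)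
        + t ^ (n + 1) * r := by
  have hφ : ContDiff ℝ (n + 1 : ℕ) (fun s : ℝ => f (s • x)) :=
    hf.comp (contDiff_id.smul contDiff_const)
  obtain ⟨s, -, hs⟩ := taylor_mean_remainder_lagrange_iteratedDeriv (n := n) ht.ne
    (by exact_mod_cast hφ.contDiffOn)
  refine ⟨iteratedFDeriv ℝ (n + 1) f (s • x) (fun _ => x) / ((n + 1).factorial : ℝ), ?_, ?_⟩
  · have h1 := (abs_iteratedFDeriv_diag_le (n + 1) f (s • x) x).trans
      (mul_le_mul_of_nonneg_right (hM _) (by positivity))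
    have h3 : (1 : ℝ) ≤ ((n + 1).factorial : ℝ) := by
      exact_mod_cast Nat.one_le_iff_ne_zero.2 (Nat.factorial_ne_zero _)
    rw [abs_div, abs_of_pos (by positivity : (0 : ℝ) < ((n + 1).factorial : ℝ))]
    exact (div_le_self (abs_nonneg _) h3).trans h1
  · rw [taylor_within_apply, iteratedDeriv_ray hf x s le_rfl, sub_zero] at hs
    have hT : ∀ k ∈ Finset.range (n + 1),
        ((k.factorial : ℝ)⁻¹ * t ^ k) • iteratedDerivWithin k (fun s : ℝ => f (s • x))
          (Set.uIcc 0 t) 0 = t ^ k / (k.factorial : ℝ) * dform k f x := by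
      intro k hk
      have hk' : k ≤ n + 1 := (Finset.mem_range.1 hk).le
      rw [iteratedDerivWithin_eq_iteratedDeriv (uniqueDiffOn_uIcc ht.ne)
        ((hφ.of_le (by exact_mod_cast hk')).contDiffAt) Set.left_mem_uIcc,
        iteratedDeriv_ray hf x 0 hk', zero_smul, smul_eq_mul, dform]
      ring
    rw [Finset.sum_congr rfl hT] at hs
    rw [sub_eq_iff_eq_add] at hs
    rw [hs]; ring

lemma pd_succ {d k n : ℕ} {f : Euc d → ℝ} (hf : ContDiff ℝ n f) (hk : k < n) (x : Euc d)
    (m : Fin (k + 1) → Fin d) :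
    pd (k + 1) f x m
      = fderiv ℝ (fun y => pd k f y (Fin.tail m)) x (EuclideanSpace.single (m 0) 1) := by
  have hd : DifferentiableAt ℝ (iteratedFDeriv ℝ k f) x :=
    (hf.differentiable_iteratedFDeriv (by exact_mod_cast hk)) x
  unfold pd
  rw [iteratedFDeriv_succ_apply_left]
  rw [fderiv_continuousMultilinear_apply_const_apply hd]
  rfl

lemma contDiff_pd {d k n j : ℕ} {f : Euc d → ℝ} (hf : ContDiff ℝ n f) (hk : j + k ≤ n)
    (m : Fin k → Fin d) : ContDiff ℝ j (fun y => pd k f y m) := by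
  have h : ContDiff ℝ j (iteratedFDeriv ℝ k f) := hf.iteratedFDeriv_right (by exact_mod_cast hk)
  exact (ContinuousMultilinearMap.apply ℝ (fun _ : Fin k => Euc d) ℝ
    (fun a => EuclideanSpace.single (m a) (1 : ℝ))).contDiff.comp h

lemma pd_swap_head {d k n : ℕ} {f : Euc d → ℝ} (hf : ContDiff ℝ n f) (hk : k + 2 ≤ n) (x : Euc d)
    (i j : Fin d) (m : Fin k → Fin d) :
    pd (k + 2) f x (Fin.cons i (Fin.cons j m)) = pd (k + 2) f x (Fin.cons j (Fin.cons i m)) := by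
  have key : ∀ i j : Fin d, pd (k + 2) f x (Fin.cons i (Fin.cons j m)) =
      fderiv ℝ (fderiv ℝ (fun y => pd k f y m)) x (EuclideanSpace.single i 1)
        (EuclideanSpace.single j 1) := by
    intro i j
    rw [pd_succ hf (by omega)]
    have h : (fun y => pd (k + 1) f y (Fin.tail (Fin.cons i (Fin.cons j m) : Fin (k + 2) → Fin d)))
        = fun y => fderiv ℝ (fun y => pd k f y m) y (EuclideanSpace.single j 1) := by
      ext y
      rw [pd_succ hf (by omega)]
      simp
    rw [h, fderiv_clm_apply]
    · simp
    · exact ((contDiff_pd (j := 2) hf (by omega) m).fderiv_right (m := 1) (by norm_num)).differentiable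
        (by norm_num) x
    · fun_prop
  rw [key, key]
  have hs := (contDiff_pd (j := 2) hf (by omega) m).contDiffAt (x := x) |>.isSymmSndFDerivAt
    (by simp [minSmoothness_of_isRCLikeNormedField])
  exact hs _ _

lemma pd_congr_tail {d k n : ℕ} {f : Euc d → ℝ} (hf : ContDiff ℝ n f) (hk : k < n)
    (i : Fin d) (m m' : Fin k → Fin d) (h : ∀ y, pd k f y m = pd k f y m') (x : Euc d) :
    pd (k + 1) f x (Fin.cons i m) = pd (k + 1) f x (Fin.cons i m') := by
  rw [pd_succ hf hk, pd_succ hf hk]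
  simp [h]

/-! ### Gaussian weights, integration by parts and the Gaussian integral -/

/-- A continuous function of at most polynomial growth. -/
def PolyGrowth {d : ℕ} (g : Euc d → ℝ) : Prop :=
  Continuous g ∧ ∃ (K : ℝ) (N : ℕ), ∀ x, |g x| ≤ K * (1 + ‖x‖) ^ N

namespace PolyGrowth

variable {d : ℕ} {f g : Euc d → ℝ}

lemma const (a : ℝ) : PolyGrowth (fun _ : Euc d => a) :=
  ⟨continuous_const, |a|, 0, fun x => by simp⟩

lemma coord (i : Fin d) : PolyGrowth (fun x : Euc d => x i) :=
  ⟨by fun_prop, 1, 1, fun x => by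
    have : |x i| ≤ ‖x‖ := PiLp.norm_apply_le x i
    linarith⟩

lemma mul (hf : PolyGrowth f) (hg : PolyGrowth g) : PolyGrowth (fun x => f x * g x) := by
  obtain ⟨hfc, K, N, hK⟩ := hf
  obtain ⟨hgc, K', N', hK'⟩ := hg
  refine ⟨hfc.mul hgc, K * K', N + N', fun x => ?_⟩
  rw [abs_mul, pow_add]
  calc |f x| * |g x| ≤ (K * (1 + ‖x‖) ^ N) * (K' * (1 + ‖x‖) ^ N') :=
        mul_le_mul (hK x) (hK' x) (abs_nonneg _) ((abs_nonneg _).trans (hK x))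
    _ = _ := by ring

lemma add (hf : PolyGrowth f) (hg : PolyGrowth g) : PolyGrowth (fun x => f x + g x) := by
  obtain ⟨hfc, K, N, hK⟩ := hf
  obtain ⟨hgc, K', N', hK'⟩ := hg
  refine ⟨hfc.add hgc, |K| + |K'|, N + N', fun x => ?_⟩
  have h1 : (1 : ℝ) ≤ 1 + ‖x‖ := by linarith [norm_nonneg x]
  have e1 : (1 + ‖x‖) ^ N ≤ (1 + ‖x‖) ^ (N + N') := pow_le_pow_right₀ h1 (by omega)
  have e2 : (1 + ‖x‖) ^ N' ≤ (1 + ‖x‖) ^ (N + N') := pow_le_pow_right₀ h1 (by omega)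
  have p : 0 ≤ (1 + ‖x‖) ^ N := by positivity
  have p' : 0 ≤ (1 + ‖x‖) ^ N' := by positivity
  calc |f x + g x| ≤ |f x| + |g x| := abs_add_le _ _
    _ ≤ K * (1 + ‖x‖) ^ N + K' * (1 + ‖x‖) ^ N' := add_le_add (hK x) (hK' x)
    _ ≤ |K| * (1 + ‖x‖) ^ N + |K'| * (1 + ‖x‖) ^ N' := by
        gcongr <;> exact le_abs_self _
    _ ≤ |K| * (1 + ‖x‖) ^ (N + N') + |K'| * (1 + ‖x‖) ^ (N + N') := by gcongr
    _ = _ := by ring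

lemma sum {ι : Type*} (s : Finset ι) {F : ι → Euc d → ℝ} (h : ∀ i, PolyGrowth (F i)) :
    PolyGrowth (fun x => ∑ i ∈ s, F i x) := by
  classical
  induction s using Finset.induction_on with
  | empty => simpa using const 0
  | insert a s ha ih => simpa [Finset.sum_insert ha] using (h a).add ih

lemma dform (k : ℕ) (f : Euc d → ℝ) : PolyGrowth (_root_.dform k f) := by
  refine ⟨?_, Dnorm k f 0, k, fun x => ?_⟩
  · have : _root_.dform k f = fun x => ∑ m : Fin k → Fin d, (∏ a, x (m a)) * pd k f 0 m := by
      ext x; exact pd_expand k f 0 x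
    rw [this]; fun_prop
  · refine (abs_iteratedFDeriv_diag_le k f 0 x).trans ?_
    have : 0 ≤ Dnorm k f 0 := Finset.sum_nonneg fun _ _ => abs_nonneg _
    gcongr
    linarith

end PolyGrowth

lemma integrable_gauss {d : ℕ} {b : ℝ} (hb : 0 < b) :
    Integrable (fun x : Euc d => exp (-b * ‖x‖ ^ 2)) := by
  have h := (GaussianFourier.integrable_cexp_neg_mul_sq_norm_add (V := Euc d) (b := (b : ℂ))
    (by simpa using hb) 0 0).norm
  refine h.congr (Filter.Eventually.of_forall fun x => ?_)
  simp only [inner_zero_left, Complex.ofReal_zero, mul_zero, add_zero]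
  rw [Complex.norm_exp]
  norm_cast

lemma poly_mul_exp_bdd {b : ℝ} (hb : 0 < b) (N : ℕ) :
    ∃ K : ℝ, ∀ r : ℝ, 0 ≤ r → (1 + r) ^ N * exp (-b * r ^ 2) ≤ K := by
  -- `(1 + r)^N ≤ N! b^{-N} exp(b (1 + r))`, and `b (1 + r) - b r²` is bounded above.
  refine ⟨(N.factorial : ℝ) / b ^ N * exp (2 * b), fun r hr => ?_⟩
  have h := Real.pow_div_factorial_le_exp (b * (1 + r)) (by positivity) N
  have h2 : (1 + r) ^ N ≤ (N.factorial : ℝ) / b ^ N * exp (b * (1 + r)) := by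
    rw [div_le_iff₀ (by positivity), mul_pow] at h
    rw [div_mul_eq_mul_div, le_div_iff₀ (by positivity)]
    linarith
  calc (1 + r) ^ N * exp (-b * r ^ 2)
      ≤ ((N.factorial : ℝ) / b ^ N * exp (b * (1 + r))) * exp (-b * r ^ 2) := by gcongr
    _ = (N.factorial : ℝ) / b ^ N * exp (b * (1 + r) + -b * r ^ 2) := by rw [exp_add]; ring
    _ ≤ _ := by
        gcongr
        nlinarith [mul_nonneg hb.le (sq_nonneg (r - 1 / 2))]

lemma integrable_poly_gauss {d : ℕ} {b : ℝ} (hb : 0 < b) (N : ℕ) :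
    Integrable (fun x : Euc d => (1 + ‖x‖) ^ N * exp (-b * ‖x‖ ^ 2)) := by
  obtain ⟨K, hK⟩ := poly_mul_exp_bdd (half_pos hb) N
  refine ((integrable_gauss (d := d) (half_pos hb)).const_mul K).mono'
    (by fun_prop) (Filter.Eventually.of_forall fun x => ?_)
  rw [Real.norm_of_nonneg (by positivity)]
  calc (1 + ‖x‖) ^ N * exp (-b * ‖x‖ ^ 2)
      = ((1 + ‖x‖) ^ N * exp (-(b / 2) * ‖x‖ ^ 2)) * exp (-(b / 2) * ‖x‖ ^ 2) := by
        rw [mul_assoc, ← exp_add]; congr 2; ring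
    _ ≤ _ := by gcongr; exact hK _ (norm_nonneg x)

/-- The quadratic form `∑ H_{ij} x_i x_j`. -/
def qf {d : ℕ} (H : Matrix (Fin d) (Fin d) ℝ) (x : Euc d) : ℝ := ∑ i, ∑ j, H i j * x i * x j

/-- The unnormalised Gaussian weight `exp(-⟨Hx, x⟩/2)`. -/
def gw {d : ℕ} (H : Matrix (Fin d) (Fin d) ℝ) (x : Euc d) : ℝ := exp (-(qf H x / 2))

lemma continuous_gw {d : ℕ} (H : Matrix (Fin d) (Fin d) ℝ) : Continuous (gw H) := by
  unfold gw qf; fun_prop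

lemma gw_le {d : ℕ} {H : Matrix (Fin d) (Fin d) ℝ} {lam : ℝ}
    (hH : ∀ x : Euc d, lam * ‖x‖ ^ 2 ≤ qf H x) (x : Euc d) :
    gw H x ≤ exp (-(lam / 2) * ‖x‖ ^ 2) := by
  unfold gw; gcongr; linarith [hH x]

lemma PolyGrowth.integrable {d : ℕ} {H : Matrix (Fin d) (Fin d) ℝ} {lam : ℝ} (hlam : 0 < lam)
    (hH : ∀ x : Euc d, lam * ‖x‖ ^ 2 ≤ qf H x) {g : Euc d → ℝ} (hg : PolyGrowth g) :
    Integrable (fun x => g x * gw H x) := by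
  obtain ⟨hc, K, N, hK⟩ := hg
  refine ((integrable_poly_gauss (d := d) (half_pos hlam) N).const_mul K).mono'
    (hc.mul (continuous_gw H)).aestronglyMeasurable (Filter.Eventually.of_forall fun x => ?_)
  have hp : 0 < gw H x := exp_pos _
  rw [norm_mul, Real.norm_eq_abs, Real.norm_of_nonneg hp.le, ← mul_assoc]
  exact mul_le_mul (hK x) (gw_le hH x) hp.le ((abs_nonneg _).trans (hK x))

lemma hasLineDerivAt_coord {d : ℕ} (v x : Euc d) (i : Fin d) :
    HasLineDerivAt ℝ (fun x : Euc d => x i) (v i) x v := by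
  unfold HasLineDerivAt
  simpa using ((hasDerivAt_id (0 : ℝ)).mul_const (v i)).const_add (x i)

lemma hasLineDerivAt_mul {d : ℕ} {f g : Euc d → ℝ} {f' g' : ℝ} {x v : Euc d}
    (hf : HasLineDerivAt ℝ f f' x v) (hg : HasLineDerivAt ℝ g g' x v) :
    HasLineDerivAt ℝ (fun x => f x * g x) (f' * g x + f x * g') x v := by
  unfold HasLineDerivAt at *
  simpa using HasDerivAt.fun_mul hf hg

lemma hasLineDerivAt_gw {d : ℕ} {H : Matrix (Fin d) (Fin d) ℝ} (hs : ∀ i j, H i j = H j i)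
    (v x : Euc d) :
    HasLineDerivAt ℝ (gw H) (-(∑ j, (∑ i, H j i * v i) * x j) * gw H x) x v := by
  have hq : HasLineDerivAt ℝ (qf H) (2 * ∑ j, (∑ i, H j i * v i) * x j) x v := by
    have h1 : HasLineDerivAt ℝ (qf H) (∑ i, ∑ j, (H i j * v i * x j + H i j * x i * v j)) x v := by
      unfold HasLineDerivAt qf
      refine HasDerivAt.fun_sum fun i _ => HasDerivAt.fun_sum fun j _ => ?_
      have := (hasLineDerivAt_mul (hasLineDerivAt_coord v x i) (hasLineDerivAt_coord v x j))
      unfold HasLineDerivAt at this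
      convert! this.const_mul (H i j) using 1
      · ext t; ring
      · ring
    convert! h1 using 1
    simp only [Finset.sum_add_distrib, two_mul, Finset.sum_mul]
    congr 1
    · rw [Finset.sum_comm]
      exact Finset.sum_congr rfl fun i _ => Finset.sum_congr rfl fun j _ => by rw [hs]
    · exact Finset.sum_congr rfl fun i _ => Finset.sum_congr rfl fun j _ => by ring
  unfold HasLineDerivAt at *
  have := ((hq.div_const 2).neg).exp
  convert! this using 1
  simp [gw]; ring

/-- Gaussian integration by parts: if `H c = 1`, then
`∫ x_i g e^{-⟨Hx,x⟩/2} = ∫ (∂_v g) e^{-⟨Hx,x⟩/2}` where `v` is the `i`-th column of `c`. -/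
lemma gauss_ibp {d : ℕ} {H c : Matrix (Fin d) (Fin d) ℝ} {lam : ℝ} (hlam : 0 < lam)
    (hH : ∀ x : Euc d, lam * ‖x‖ ^ 2 ≤ qf H x) (hs : ∀ i j, H i j = H j i) (hc : H * c = 1)
    (i : Fin d) {g g' : Euc d → ℝ} (hg : PolyGrowth g) (hg' : PolyGrowth g')
    (hd : ∀ x, HasLineDerivAt ℝ g (g' x) x (WithLp.toLp 2 fun j => c j i)) :
    ∫ x, (x i * g x) * gw H x = ∫ x, g' x * gw H x := by
  have hw : ∀ x : Euc d, HasLineDerivAt ℝ (gw H) (-(x i) * gw H x) x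
      (WithLp.toLp 2 fun j => c j i) := by
    intro x
    convert! hasLineDerivAt_gw hs (WithLp.toLp 2 fun j => c j i) x using 3
    have : ∀ j, ∑ k, H j k * c k i = if j = i then 1 else 0 := by
      intro j
      have := congrFun (congrFun hc j) i
      rwa [Matrix.mul_apply, Matrix.one_apply] at this
    simp [this]
  have h := integral_bilinear_hasLineDerivAt_right_eq_neg_left_of_integrable
    (μ := (volume : Measure (Euc d))) (B := ContinuousLinearMap.mul ℝ ℝ) (f := g) (f' := g')
    (g := gw H) (g' := fun x => -(x i) * gw H x) (v := WithLp.toLp 2 fun j => c j i)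
    (by simpa using hg'.integrable hlam hH)
    (by
      have := ((PolyGrowth.coord i).mul hg).integrable hlam hH |>.neg
      refine this.congr (Filter.Eventually.of_forall fun x => ?_)
      simp; ring)
    (by simpa using hg.integrable hlam hH)
    (fun x _ => hd x) (fun x _ => hw x)
  simp only [ContinuousLinearMap.mul_apply'] at h
  rw [← neg_inj, ← h, ← integral_neg]
  congr 1; ext x; ring

lemma gauss_integral {d : ℕ} {H : Matrix (Fin d) (Fin d) ℝ} (hP : H.PosDef) :
    ∫ x, gw H x = (2 * π) ^ ((d : ℝ) / 2) * (√H.det)⁻¹ := by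
  obtain ⟨A, hA⟩ : ∃ A : Matrix (Fin d) (Fin d) ℝ, H = A.transpose * A := by
    open scoped MatrixOrder Matrix.Norms.L2Operator in
    obtain ⟨A, hA⟩ := CStarAlgebra.nonneg_iff_eq_star_mul_self.mp hP.posSemidef.nonneg
    exact ⟨A, by simpa [Matrix.star_eq_conjTranspose] using hA⟩
  have hdet : H.det = A.det ^ 2 := by rw [hA, Matrix.det_mul, Matrix.det_transpose, sq]
  have hA0 : A.det ≠ 0 := by
    intro h; have := hP.det_pos; rw [hdet, h] at this; simp at this
  set L : Euc d →ₗ[ℝ] Euc d := Matrix.toEuclideanLin A with hL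
  have hLd : LinearMap.det L = A.det := by
    rw [hL, Matrix.toEuclideanLin, Matrix.toLpLin_eq_toLin, LinearMap.det_toLin]
  have hgw : ∀ x, gw H x = exp (-(1 / 2) * ‖L x‖ ^ 2) := by
    intro x
    have : qf H x = ‖L x‖ ^ 2 := by
      rw [EuclideanSpace.real_norm_sq_eq]
      have hLx : ∀ k, L x k = ∑ i, A k i * x i := fun k => rfl
      simp only [hLx, qf, hA, Matrix.mul_apply, Matrix.transpose_apply, sq, Finset.sum_mul,
        Finset.mul_sum]
      conv_rhs => rw [Finset.sum_comm]
      refine Finset.sum_congr rfl fun i _ => ?_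
      rw [Finset.sum_comm]
      exact Finset.sum_congr rfl fun i _ => Finset.sum_congr rfl fun j _ => by ring
    rw [gw, this]; congr 1; ring
  have hLc : Continuous L := LinearMap.continuous_of_finiteDimensional L
  have hmap := Measure.map_linearMap_addHaar_eq_smul_addHaar (volume : Measure (Euc d)) (f := L)
    (by rwa [hLd])
  simp only [hgw]
  rw [← integral_map (f := fun y : Euc d => exp (-(1 / 2) * ‖y‖ ^ 2)) hLc.aemeasurable (by fun_prop),
    hmap, integral_smul_measure, GaussianFourier.integral_rexp_neg_mul_sq_norm (by norm_num), hLd,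
    hdet, Real.sqrt_sq_eq_abs, ENNReal.toReal_ofReal (abs_nonneg _)]
  simp only [finrank_euclideanSpace, Fintype.card_fin, smul_eq_mul, abs_inv]
  rw [mul_comm]; congr 2; ring

/-! ### Gaussian moments -/

/-- `c` is the (symmetric) inverse of a symmetric matrix `H` whose quadratic form is bounded below
by `lam * ‖x‖ ^ 2` with `lam > 0`. -/
structure GaussPair {d : ℕ} (H c : Matrix (Fin d) (Fin d) ℝ) (lam : ℝ) : Prop where
  pos : 0 < lam
  lower : ∀ x : Euc d, lam * ‖x‖ ^ 2 ≤ qf H x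
  symmH : ∀ i j, H i j = H j i
  symmC : ∀ i j, c i j = c j i
  mul_eq : H * c = 1

/-- The unnormalised Gaussian expectation `∫ g e^{-⟨Hx,x⟩/2}`. -/
def gE {d : ℕ} (H : Matrix (Fin d) (Fin d) ℝ) (g : Euc d → ℝ) : ℝ := ∫ x, g x * gw H x

namespace GaussPair

variable {d : ℕ} {H c : Matrix (Fin d) (Fin d) ℝ} {lam : ℝ} {f g : Euc d → ℝ}

lemma add (h : GaussPair H c lam) (hf : PolyGrowth f) (hg : PolyGrowth g) :
    gE H (fun x => f x + g x) = gE H f + gE H g := by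
  unfold gE
  rw [← integral_add (hf.integrable h.pos h.lower) (hg.integrable h.pos h.lower)]
  congr 1; ext x; ring

lemma const_mul (a : ℝ) (g : Euc d → ℝ) : gE H (fun x => a * g x) = a * gE H g := by
  unfold gE
  rw [← integral_const_mul]
  congr 1; ext x; ring

lemma sum (h : GaussPair H c lam) {ι : Type*} [Fintype ι] {G : ι → Euc d → ℝ}
    (hG : ∀ i, PolyGrowth (G i)) : gE H (fun x => ∑ i, G i x) = ∑ i, gE H (G i) := by
  unfold gE
  rw [← integral_finsetSum _ fun i _ => (hG i).integrable h.pos h.lower]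
  congr 1; ext x; rw [Finset.sum_mul]

lemma ibp (h : GaussPair H c lam) (i : Fin d) {g g' : Euc d → ℝ} (hg : PolyGrowth g)
    (hg' : PolyGrowth g')
    (hd : ∀ x, HasLineDerivAt ℝ g (g' x) x (WithLp.toLp 2 fun j => c j i)) :
    gE H (fun x => x i * g x) = gE H g' :=
  gauss_ibp h.pos h.lower h.symmH h.mul_eq i hg hg' hd

open PolyGrowth (coord)

lemma moment2 (h : GaussPair H c lam) (i j : Fin d) :
    gE H (fun x => x i * x j) = c i j * gE H (fun _ => 1) := by
  rw [h.ibp i (coord j) (PolyGrowth.const (c j i)) fun x => hasLineDerivAt_coord _ x j,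
    ← const_mul, h.symmC]
  simp

lemma moment4 (h : GaussPair H c lam) (i j k l : Fin d) :
    gE H (fun x => x i * (x j * (x k * x l)))
      = (c i j * c k l + c i k * c j l + c i l * c j k) * gE H (fun _ => 1) := by
  have e : gE H (fun x => x i * (x j * (x k * x l))) =
      gE H (fun x => c i j * (x k * x l) + (c i k * (x j * x l) + c i l * (x j * x k))) := by
    refine h.ibp i ((coord j).mul ((coord k).mul (coord l)))
      (((PolyGrowth.const _).mul ((coord k).mul (coord l))).add
        (((PolyGrowth.const _).mul ((coord j).mul (coord l))).add
          ((PolyGrowth.const _).mul ((coord j).mul (coord k))))) fun x => ?_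
    have D := hasLineDerivAt_coord (WithLp.toLp 2 fun j => c j i)
    convert! hasLineDerivAt_mul (D x j) (hasLineDerivAt_mul (D x k) (D x l)) using 1
    simp only [h.symmC i]; ring
  rw [e, h.add ((PolyGrowth.const _).mul ((coord k).mul (coord l)))
        (((PolyGrowth.const _).mul ((coord j).mul (coord l))).add
          ((PolyGrowth.const _).mul ((coord j).mul (coord k)))),
    h.add ((PolyGrowth.const _).mul ((coord j).mul (coord l)))
          ((PolyGrowth.const _).mul ((coord j).mul (coord k))), const_mul, const_mul, const_mul,
    h.moment2, h.moment2, h.moment2]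
  ring

lemma mono4 (i j k l : Fin d) : PolyGrowth (fun x : Euc d => x i * (x j * (x k * x l))) :=
  (coord i).mul ((coord j).mul ((coord k).mul (coord l)))

lemma moment6 (h : GaussPair H c lam) (i j k l m n : Fin d) :
    gE H (fun x => x i * (x j * (x k * (x l * (x m * x n)))))
      = (c i j * (c k l * c m n + c k m * c l n + c k n * c l m)
        + c i k * (c j l * c m n + c j m * c l n + c j n * c l m)
        + c i l * (c j k * c m n + c j m * c k n + c j n * c k m)
        + c i m * (c j k * c l n + c j l * c k n + c j n * c k l)
        + c i n * (c j k * c l m + c j l * c k m + c j m * c k l)) * gE H (fun _ => 1) := by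
  have p : ∀ a i j k l, PolyGrowth (fun x : Euc d => a * (x i * (x j * (x k * x l)))) :=
    fun a i j k l => (PolyGrowth.const a).mul (mono4 i j k l)
  have e : gE H (fun x => x i * (x j * (x k * (x l * (x m * x n))))) =
      gE H (fun x => c i j * (x k * (x l * (x m * x n))) + (c i k * (x j * (x l * (x m * x n)))
        + (c i l * (x j * (x k * (x m * x n))) + (c i m * (x j * (x k * (x l * x n)))
        + c i n * (x j * (x k * (x l * x m))))))) := by
    refine h.ibp i ((coord j).mul (mono4 k l m n))
      ((p _ k l m n).add ((p _ j l m n).add ((p _ j k m n).add ((p _ j k l n).add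
        (p _ j k l m))))) fun x => ?_
    have D := hasLineDerivAt_coord (WithLp.toLp 2 fun j => c j i)
    convert! hasLineDerivAt_mul (D x j) (hasLineDerivAt_mul (D x k) (hasLineDerivAt_mul (D x l)
      (hasLineDerivAt_mul (D x m) (D x n)))) using 1
    simp only [h.symmC i]; ring
  rw [e, h.add (p _ k l m n) ((p _ j l m n).add ((p _ j k m n).add ((p _ j k l n).add
        (p _ j k l m)))), h.add (p _ j l m n) ((p _ j k m n).add ((p _ j k l n).add
        (p _ j k l m))), h.add (p _ j k m n) ((p _ j k l n).add (p _ j k l m)),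
    h.add (p _ j k l n) (p _ j k l m)]
  simp only [const_mul, h.moment4]
  ring

end GaussPair

section Contractions

variable {d : ℕ} {H c : Matrix (Fin d) (Fin d) ℝ} {lam : ℝ}

lemma sum_cons {k : ℕ} (G : (Fin (k + 1) → Fin d) → ℝ) :
    ∑ m, G m = ∑ i, ∑ m : Fin k → Fin d, G (Fin.cons i m) := by
  rw [← (Fin.consEquiv fun _ => Fin d).sum_comp, Fintype.sum_prod_type]
  rfl

lemma dform_one (f : Euc d → ℝ) (x : Euc d) :
    dform 1 f x = ∑ i, pd 1 f 0 ![i] * x i := by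
  simp only [dform, pd_expand, sum_cons, Fintype.sum_unique, Fin.prod_univ_succ, Fin.cons_zero,
    Finset.univ_eq_empty, Finset.prod_empty]
  refine Finset.sum_congr rfl fun i _ => ?_
  rw [mul_one, mul_comm]
  congr 2

lemma dform_two (f : Euc d → ℝ) (x : Euc d) :
    dform 2 f x = ∑ i, ∑ j, pd 2 f 0 ![i, j] * (x i * x j) := by
  simp only [dform, pd_expand, sum_cons, Fintype.sum_unique, Fin.prod_univ_succ, Fin.cons_zero,
    Fin.cons_succ, Finset.univ_eq_empty, Finset.prod_empty]
  refine Finset.sum_congr rfl fun i _ => Finset.sum_congr rfl fun j _ => ?_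
  rw [mul_one, mul_comm]
  congr 2

lemma dform_three (f : Euc d → ℝ) (x : Euc d) :
    dform 3 f x = ∑ i, ∑ j, ∑ k, pd 3 f 0 ![i, j, k] * (x i * (x j * x k)) := by
  simp only [dform, pd_expand, sum_cons, Fintype.sum_unique, Fin.prod_univ_succ, Fin.cons_zero,
    Fin.cons_succ, Finset.univ_eq_empty, Finset.prod_empty]
  refine Finset.sum_congr rfl fun i _ => Finset.sum_congr rfl fun j _ =>
    Finset.sum_congr rfl fun k _ => ?_
  rw [mul_one, mul_comm]
  congr 2

lemma dform_four (f : Euc d → ℝ) (x : Euc d) :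
    dform 4 f x = ∑ i, ∑ j, ∑ k, ∑ l, pd 4 f 0 ![i, j, k, l] * (x i * (x j * (x k * x l))) := by
  simp only [dform, pd_expand, sum_cons, Fintype.sum_unique, Fin.prod_univ_succ, Fin.cons_zero,
    Fin.cons_succ, Finset.univ_eq_empty, Finset.prod_empty]
  refine Finset.sum_congr rfl fun i _ => Finset.sum_congr rfl fun j _ =>
    Finset.sum_congr rfl fun k _ => Finset.sum_congr rfl fun l _ => ?_
  rw [mul_one, mul_comm]
  congr 2

lemma gE_dform_two (h : GaussPair H c lam) (f : Euc d → ℝ) :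
    gE H (dform 2 f) = (∑ i, ∑ j, c i j * pd 2 f 0 ![i, j]) * gE H (fun _ => 1) := by
  have p : ∀ a i j, PolyGrowth (fun x : Euc d => a * (x i * x j)) := fun a i j =>
    (PolyGrowth.const a).mul ((PolyGrowth.coord i).mul (PolyGrowth.coord j))
  rw [show dform 2 f = _ from funext (dform_two f),
    h.sum fun i => PolyGrowth.sum _ fun j => p _ i j, Finset.sum_mul]
  refine Finset.sum_congr rfl fun i _ => ?_
  rw [h.sum fun j => p _ i j, Finset.sum_mul]
  refine Finset.sum_congr rfl fun j _ => ?_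
  rw [GaussPair.const_mul, h.moment2]; ring

lemma gE_quartic (h : GaussPair H c lam) (T : Fin d → Fin d → Fin d → Fin d → ℝ) :
    gE H (fun x => ∑ i, ∑ j, ∑ k, ∑ l, T i j k l * (x i * (x j * (x k * x l))))
      = (∑ i, ∑ j, ∑ k, ∑ l, T i j k l * (c i j * c k l + c i k * c j l + c i l * c j k))
        * gE H (fun _ => 1) := by
  have p : ∀ a i j k l, PolyGrowth (fun x : Euc d => a * (x i * (x j * (x k * x l)))) :=
    fun a i j k l => (PolyGrowth.const a).mul (GaussPair.mono4 i j k l)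
  rw [h.sum fun i => PolyGrowth.sum _ fun j => PolyGrowth.sum _ fun k => PolyGrowth.sum _
    fun l => p _ i j k l, Finset.sum_mul]
  refine Finset.sum_congr rfl fun i _ => ?_
  rw [h.sum fun j => PolyGrowth.sum _ fun k => PolyGrowth.sum _ fun l => p _ i j k l,
    Finset.sum_mul]
  refine Finset.sum_congr rfl fun j _ => ?_
  rw [h.sum fun k => PolyGrowth.sum _ fun l => p _ i j k l, Finset.sum_mul]
  refine Finset.sum_congr rfl fun k _ => ?_
  rw [h.sum fun l => p _ i j k l, Finset.sum_mul]
  refine Finset.sum_congr rfl fun l _ => ?_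
  rw [GaussPair.const_mul, h.moment4]; ring

lemma gE_sextic (h : GaussPair H c lam) (T : Fin d → Fin d → Fin d → ℝ) :
    gE H (fun x => (∑ i, ∑ j, ∑ k, T i j k * (x i * (x j * x k))) ^ 2)
      = (∑ i, ∑ j, ∑ k, ∑ l, ∑ m, ∑ n, T i j k * T l m n *
        (c i j * (c k l * c m n + c k m * c l n + c k n * c l m)
        + c i k * (c j l * c m n + c j m * c l n + c j n * c l m)
        + c i l * (c j k * c m n + c j m * c k n + c j n * c k m)
        + c i m * (c j k * c l n + c j l * c k n + c j n * c k l)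
        + c i n * (c j k * c l m + c j l * c k m + c j m * c k l)))
        * gE H (fun _ => 1) := by
  have p : ∀ a i j k l m n, PolyGrowth
      (fun x : Euc d => a * (x i * (x j * (x k * (x l * (x m * x n)))))) :=
    fun a i j k l m n => (PolyGrowth.const a).mul
      ((PolyGrowth.coord i).mul ((PolyGrowth.coord j).mul (GaussPair.mono4 k l m n)))
  have e : (fun x : Euc d => (∑ i, ∑ j, ∑ k, T i j k * (x i * (x j * x k))) ^ 2) = fun x =>
      ∑ i, ∑ j, ∑ k, ∑ l, ∑ m, ∑ n,
        (T i j k * T l m n) * (x i * (x j * (x k * (x l * (x m * x n))))) := by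
    ext x
    simp only [sq, Finset.sum_mul]
    refine Finset.sum_congr rfl fun i _ => Finset.sum_congr rfl fun j _ =>
      Finset.sum_congr rfl fun k _ => ?_
    simp only [Finset.mul_sum]
    refine Finset.sum_congr rfl fun i _ => Finset.sum_congr rfl fun j _ =>
      Finset.sum_congr rfl fun k _ => ?_
    ring
  rw [e]
  have S := fun {ι : Type} [Fintype ι] {G : ι → Euc d → ℝ} (h : ∀ i, PolyGrowth (G i)) =>
    PolyGrowth.sum (Finset.univ : Finset ι) h
  rw [h.sum fun i => S fun j => S fun k => S fun l => S fun m => S fun n => p _ i j k l m n,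
    Finset.sum_mul]
  refine Finset.sum_congr rfl fun i _ => ?_
  rw [h.sum fun j => S fun k => S fun l => S fun m => S fun n => p _ i j k l m n,
    Finset.sum_mul]
  refine Finset.sum_congr rfl fun j _ => ?_
  rw [h.sum fun k => S fun l => S fun m => S fun n => p _ i j k l m n, Finset.sum_mul]
  refine Finset.sum_congr rfl fun k _ => ?_
  rw [h.sum fun l => S fun m => S fun n => p _ i j k l m n, Finset.sum_mul]
  refine Finset.sum_congr rfl fun l _ => ?_
  rw [h.sum fun m => S fun n => p _ i j k l m n, Finset.sum_mul]
  refine Finset.sum_congr rfl fun m _ => ?_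
  rw [h.sum fun n => p _ i j k l m n, Finset.sum_mul]
  refine Finset.sum_congr rfl fun n _ => ?_
  rw [GaussPair.const_mul, h.moment6]; ring

end Contractions

/-! ### The second-order coefficient -/

section Symmetric

variable {d : ℕ} {H c : Matrix (Fin d) (Fin d) ℝ} {lam : ℝ}

/-- A three-index tensor invariant under all permutations of its indices, expressed through
adjacent transpositions. -/
def Symm3 (T : Fin d → Fin d → Fin d → ℝ) : Prop :=
  (∀ i j k, T i j k = T j i k) ∧ ∀ i j k, T i j k = T i k j

/-- The contraction `∑ T_{ijk} g_{ijk}`. -/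
def con3 (T g : Fin d → Fin d → Fin d → ℝ) : ℝ := ∑ i, ∑ j, ∑ k, T i j k * g i j k

lemma con3_swap12 {T : Fin d → Fin d → Fin d → ℝ} (hT : Symm3 T) (g : Fin d → Fin d → Fin d → ℝ) :
    con3 T g = con3 T fun i j k => g j i k := by
  unfold con3
  rw [Finset.sum_comm]
  simp only [hT.1]

lemma con3_swap23 {T : Fin d → Fin d → Fin d → ℝ} (hT : Symm3 T) (g : Fin d → Fin d → Fin d → ℝ) :
    con3 T g = con3 T fun i j k => g i k j := by
  unfold con3
  refine Finset.sum_congr rfl fun i _ => ?_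
  rw [Finset.sum_comm]
  simp only [hT.2 i]

/-- The contraction `∑ T_{ijk} T_{lmn} g_{ijklmn}`. -/
def con6 (T : Fin d → Fin d → Fin d → ℝ)
    (g : Fin d → Fin d → Fin d → Fin d → Fin d → Fin d → ℝ) : ℝ :=
  con3 T fun i j k => con3 T fun l m n => g i j k l m n

variable {T : Fin d → Fin d → Fin d → ℝ}

lemma con6_swap12 (hT : Symm3 T) (g : Fin d → Fin d → Fin d → Fin d → Fin d → Fin d → ℝ) :
    con6 T g = con6 T fun i j k l m n => g j i k l m n := con3_swap12 hT _

lemma con6_swap23 (hT : Symm3 T) (g : Fin d → Fin d → Fin d → Fin d → Fin d → Fin d → ℝ) :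
    con6 T g = con6 T fun i j k l m n => g i k j l m n := con3_swap23 hT _

lemma con6_swap45 (hT : Symm3 T) (g : Fin d → Fin d → Fin d → Fin d → Fin d → Fin d → ℝ) :
    con6 T g = con6 T fun i j k l m n => g i j k m l n := by
  unfold con6; congr 1; funext i j k; exact con3_swap12 hT _

lemma con6_swap56 (hT : Symm3 T) (g : Fin d → Fin d → Fin d → Fin d → Fin d → Fin d → ℝ) :
    con6 T g = con6 T fun i j k l m n => g i j k l n m := by
  unfold con6; congr 1; funext i j k; exact con3_swap23 hT _

lemma con6_add (g g' : Fin d → Fin d → Fin d → Fin d → Fin d → Fin d → ℝ) :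
    con6 T (fun i j k l m n => g i j k l m n + g' i j k l m n) = con6 T g + con6 T g' := by
  simp only [con6, con3, mul_add, Finset.sum_add_distrib]

lemma con6_eq (g : Fin d → Fin d → Fin d → Fin d → Fin d → Fin d → ℝ) :
    con6 T g = ∑ i, ∑ j, ∑ k, ∑ l, ∑ m, ∑ n, T i j k * T l m n * g i j k l m n := by
  simp only [con6, con3, Finset.mul_sum, mul_assoc]

/-- Of the fifteen pairings of six indices split into two symmetric triples, nine contract
within the triples and six pair the two triples completely. -/
lemma con6_pairings (hT : Symm3 T) :
    con6 T (fun i j k l m n =>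
        c i j * (c k l * c m n + c k m * c l n + c k n * c l m)
        + c i k * (c j l * c m n + c j m * c l n + c j n * c l m)
        + c i l * (c j k * c m n + c j m * c k n + c j n * c k m)
        + c i m * (c j k * c l n + c j l * c k n + c j n * c k l)
        + c i n * (c j k * c l m + c j l * c k m + c j m * c k l))
      = 9 * con6 T (fun i j k l m n => c i j * c k l * c m n)
        + 6 * con6 T (fun i j k l m n => c i l * c j m * c k n) := by
  have e2 : con6 T (fun i j k l m n => c i j * c k m * c l n)
      = con6 T (fun i j k l m n => c i j * c k l * c m n) := by
    rw [con6_swap45 hT]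
  have e3 : con6 T (fun i j k l m n => c i j * c k n * c l m)
      = con6 T (fun i j k l m n => c i j * c k l * c m n) := by
    rw [← e2, con6_swap56 hT]
  have e4 : con6 T (fun i j k l m n => c i k * c j l * c m n)
      = con6 T (fun i j k l m n => c i j * c k l * c m n) := by
    rw [con6_swap23 hT]
  have e5 : con6 T (fun i j k l m n => c i k * c j m * c l n)
      = con6 T (fun i j k l m n => c i j * c k l * c m n) := by
    rw [← e2, con6_swap23 hT]
  have e6 : con6 T (fun i j k l m n => c i k * c j n * c l m)
      = con6 T (fun i j k l m n => c i j * c k l * c m n) := by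
    rw [← e3, con6_swap23 hT]
  have e7 : con6 T (fun i j k l m n => c i l * c j k * c m n)
      = con6 T (fun i j k l m n => c i j * c k l * c m n) := by
    rw [← e4, con6_swap12 hT]; simp only [mul_comm, mul_left_comm]
  have e10 : con6 T (fun i j k l m n => c i m * c j k * c l n)
      = con6 T (fun i j k l m n => c i j * c k l * c m n) := by
    rw [← e5, con6_swap12 hT]; simp only [mul_comm, mul_left_comm]
  have e13 : con6 T (fun i j k l m n => c i n * c j k * c l m)
      = con6 T (fun i j k l m n => c i j * c k l * c m n) := by
    rw [← e6, con6_swap12 hT]; simp only [mul_comm, mul_left_comm]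
  have e9 : con6 T (fun i j k l m n => c i l * c j n * c k m)
      = con6 T (fun i j k l m n => c i l * c j m * c k n) := by
    rw [con6_swap56 hT]
  have e11 : con6 T (fun i j k l m n => c i m * c j l * c k n)
      = con6 T (fun i j k l m n => c i l * c j m * c k n) := by
    rw [con6_swap45 hT]
  have e12 : con6 T (fun i j k l m n => c i m * c j n * c k l)
      = con6 T (fun i j k l m n => c i l * c j m * c k n) := by
    rw [← e9, con6_swap45 hT]
  have e14 : con6 T (fun i j k l m n => c i n * c j l * c k m)
      = con6 T (fun i j k l m n => c i l * c j m * c k n) := by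
    rw [← e11, con6_swap56 hT]
  have e15 : con6 T (fun i j k l m n => c i n * c j m * c k l)
      = con6 T (fun i j k l m n => c i l * c j m * c k n) := by
    rw [← e12, con6_swap56 hT]
  simp only [mul_add, ← mul_assoc, con6_add, e2, e3, e4, e5, e6, e7, e9, e10, e11, e12, e13,
    e14, e15]
  ring

lemma gE_cubic_sq (h : GaussPair H c lam) (hT : Symm3 T) :
    gE H (fun x => (∑ i, ∑ j, ∑ k, T i j k * (x i * (x j * x k))) ^ 2)
      = (9 * (∑ i, ∑ j, ∑ k, ∑ l, ∑ m, ∑ n, T i j k * T l m n * c i j * c k l * c m n)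
        + 6 * (∑ i, ∑ j, ∑ k, ∑ l, ∑ m, ∑ n, T i j k * T l m n * c i l * c j m * c k n))
        * gE H (fun _ => 1) := by
  rw [gE_sextic h, ← con6_eq, con6_pairings hT, con6_eq, con6_eq]
  simp only [mul_assoc]

lemma gE_linear_cubic (h : GaussPair H c lam) (hT : Symm3 T) (V : Fin d → ℝ) :
    gE H (fun x => (∑ i, ∑ j, ∑ k, T i j k * (x i * (x j * x k))) * ∑ i, V i * x i)
      = 3 * (∑ i, ∑ j, ∑ k, ∑ l, T j k l * c i j * c k l * V i) * gE H (fun _ => 1) := by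
  have e : (fun x : Euc d => (∑ i, ∑ j, ∑ k, T i j k * (x i * (x j * x k))) * ∑ i, V i * x i)
      = fun x => ∑ i, ∑ j, ∑ k, ∑ l, (V i * T j k l) * (x i * (x j * (x k * x l))) := by
    ext x
    rw [mul_comm, Finset.sum_mul]
    refine Finset.sum_congr rfl fun i _ => ?_
    simp only [Finset.mul_sum]
    refine Finset.sum_congr rfl fun j _ => Finset.sum_congr rfl fun k _ =>
      Finset.sum_congr rfl fun l _ => ?_
    ring
  rw [e, gE_quartic h]
  congr 1
  rw [Finset.mul_sum]
  refine Finset.sum_congr rfl fun i _ => ?_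
  have e1 : con3 T (fun j k l => c i k * c j l) = con3 T (fun j k l => c i j * c k l) := by
    rw [con3_swap12 hT]
  have e2 : con3 T (fun j k l => c i l * c j k) = con3 T (fun j k l => c i j * c k l) := by
    rw [← e1, con3_swap23 hT]
  have key : V i * (con3 T (fun j k l => c i j * c k l) + con3 T (fun j k l => c i k * c j l)
      + con3 T (fun j k l => c i l * c j k)) = 3 * V i * con3 T (fun j k l => c i j * c k l) := by
    rw [e1, e2]; ring
  simp only [con3, ← Finset.sum_add_distrib, Finset.mul_sum] at key
  simp only [Finset.mul_sum]
  convert! key using 4 <;> ring_nf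

lemma gE_quartic_symm (h : GaussPair H c lam) {S : Fin d → Fin d → Fin d → Fin d → ℝ}
    (h23 : ∀ i j k l, S i j k l = S i k j l) (h34 : ∀ i j k l, S i j k l = S i j l k) :
    gE H (fun x => ∑ i, ∑ j, ∑ k, ∑ l, S i j k l * (x i * (x j * (x k * x l))))
      = 3 * (∑ i, ∑ j, ∑ k, ∑ l, S i j k l * c i j * c k l) * gE H (fun _ => 1) := by
  rw [gE_quartic h]
  congr 1
  rw [Finset.mul_sum]
  refine Finset.sum_congr rfl fun i _ => ?_
  have hT : Symm3 (S i) := ⟨h23 i, h34 i⟩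
  have e1 : con3 (S i) (fun j k l => c i k * c j l) = con3 (S i) (fun j k l => c i j * c k l) := by
    rw [con3_swap12 hT]
  have e2 : con3 (S i) (fun j k l => c i l * c j k) = con3 (S i) (fun j k l => c i j * c k l) := by
    rw [← e1, con3_swap23 hT]
  have key : con3 (S i) (fun j k l => c i j * c k l) + con3 (S i) (fun j k l => c i k * c j l)
      + con3 (S i) (fun j k l => c i l * c j k) = 3 * con3 (S i) (fun j k l => c i j * c k l) := by
    rw [e1, e2]; ring
  simp only [con3, ← Finset.sum_add_distrib, Finset.mul_sum] at key
  simp only [Finset.mul_sum]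
  convert! key using 4 <;> ring_nf

end Symmetric

lemma pd3_symm {d : ℕ} {U : Euc d → ℝ} (hU : ContDiff ℝ (6 : ℕ) U) :
    Symm3 fun i j k => pd 3 U 0 ![i, j, k] :=
  ⟨fun i j k => pd_swap_head hU (by norm_num) 0 i j ![k],
   fun i j k => pd_congr_tail hU (by norm_num) i ![j, k] ![k, j]
    (fun y => pd_swap_head hU (by norm_num) y j k ![]) 0⟩

/-- The coefficient of `t²` in the expansion of `e^{-U(tx)/t²} F(tx) e^{D²U(0)[x,x]/2}`. -/
def coeff2 {d : ℕ} (U F : Euc d → ℝ) (x : Euc d) : ℝ :=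
  1 / 2 * dform 2 F x + (-(1 / 6)) * (dform 3 U x * dform 1 F x)
    + (F 0 / 72 * dform 3 U x ^ 2 + (-(F 0 / 24)) * dform 4 U x)

lemma polyGrowth_dform3_sq {d : ℕ} (U : Euc d → ℝ) : PolyGrowth fun x => dform 3 U x ^ 2 := by
  simpa only [sq] using (PolyGrowth.dform 3 U).mul (PolyGrowth.dform 3 U)

/-- Isserlis' theorem identifies the Gaussian average of `coeff2` with `lap1`. -/
lemma gE_coeff2 {d : ℕ} {U F : Euc d → ℝ} {lam : ℝ} (hU : ContDiff ℝ (6 : ℕ) U)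
    (h : GaussPair (hess U 0) (hess U 0)⁻¹ lam) :
    gE (hess U 0) (coeff2 U F) = lap1 U F 0 * gE (hess U 0) (fun _ => 1) := by
  have h3 := gE_cubic_sq h (pd3_symm hU)
  have h31 := gE_linear_cubic h (pd3_symm hU) fun i => pd 1 F 0 ![i]
  have h2 := gE_dform_two h F
  have h4 := gE_quartic_symm h (S := fun i j k l => pd 4 U 0 ![i, j, k, l])
    (fun i j k l => pd_congr_tail hU (by norm_num) i ![j, k, l] ![k, j, l]
      (fun y => pd_swap_head hU (by norm_num) y j k ![l]) 0)
    (fun i j k l => pd_congr_tail hU (by norm_num) i ![j, k, l] ![j, l, k]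
      (fun y => pd_congr_tail hU (by norm_num) j ![k, l] ![l, k]
        (fun y => pd_swap_head hU (by norm_num) y k l ![]) y) 0)
  simp only [← dform_three, ← dform_one, ← dform_four] at h3 h31 h4
  have p1 := (PolyGrowth.const (1 / 2)).mul (PolyGrowth.dform 2 F)
  have p2 := (PolyGrowth.const (-(1 / 6))).mul ((PolyGrowth.dform 3 U).mul (PolyGrowth.dform 1 F))
  have p3 := (PolyGrowth.const (F 0 / 72)).mul (polyGrowth_dform3_sq U)
  have p4 := (PolyGrowth.const (-(F 0 / 24))).mul (PolyGrowth.dform 4 U)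
  unfold coeff2
  rw [h.add (p1.add p2) (p3.add p4), h.add p1 p2, h.add p3 p4]
  simp only [GaussPair.const_mul]
  rw [h3, h31, h4, h2, lap1]
  ring

/-! ### Expansion of the exponential in a small parameter -/

/-- The value `a` at the parameter `t` has the third-order expansion with coefficients
`a₀, a₁, a₂, a₃`; all coefficients and the remainder are bounded by `B`. -/
def Jet (t B a a₀ a₁ a₂ a₃ : ℝ) : Prop :=
  |a₀| ≤ B ∧ |a₁| ≤ B ∧ |a₂| ≤ B ∧ |a₃| ≤ B ∧
    ∃ r, |r| ≤ B ∧ a = a₀ + t * a₁ + t ^ 2 * a₂ + t ^ 3 * a₃ + t ^ 4 * r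

namespace Jet

variable {t B B' a b a₀ a₁ a₂ a₃ b₀ b₁ b₂ b₃ : ℝ}

lemma const (hB : |a| ≤ B) : Jet t B a a 0 0 0 := by
  have h0 : |(0 : ℝ)| ≤ B := by rw [abs_zero]; exact (abs_nonneg _).trans hB
  exact ⟨hB, h0, h0, h0, 0, h0, by ring⟩

lemma mono (h : Jet t B a a₀ a₁ a₂ a₃) (hB : B ≤ B') : Jet t B' a a₀ a₁ a₂ a₃ := by
  obtain ⟨h0, h1, h2, h3, r, hr, e⟩ := h
  exact ⟨h0.trans hB, h1.trans hB, h2.trans hB, h3.trans hB, r, hr.trans hB, e⟩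

lemma add (h : Jet t B a a₀ a₁ a₂ a₃) (h' : Jet t B' b b₀ b₁ b₂ b₃) :
    Jet t (B + B') (a + b) (a₀ + b₀) (a₁ + b₁) (a₂ + b₂) (a₃ + b₃) := by
  obtain ⟨h0, h1, h2, h3, r, hr, e⟩ := h
  obtain ⟨k0, k1, k2, k3, s, hs, f⟩ := h'
  refine ⟨(abs_add_le _ _).trans (add_le_add h0 k0), (abs_add_le _ _).trans (add_le_add h1 k1),
    (abs_add_le _ _).trans (add_le_add h2 k2), (abs_add_le _ _).trans (add_le_add h3 k3), r + s,
    (abs_add_le _ _).trans (add_le_add hr hs), ?_⟩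
  rw [e, f]; ring

lemma mul (ht : 0 ≤ t) (ht1 : t ≤ 1) (h : Jet t B a a₀ a₁ a₂ a₃)
    (h' : Jet t B' b b₀ b₁ b₂ b₃) :
    Jet t (15 * (B * B')) (a * b) (a₀ * b₀) (a₀ * b₁ + a₁ * b₀) (a₀ * b₂ + a₁ * b₁ + a₂ * b₀)
      (a₀ * b₃ + a₁ * b₂ + a₂ * b₁ + a₃ * b₀) := by
  obtain ⟨h0, h1, h2, h3, r, hr, e⟩ := h
  obtain ⟨k0, k1, k2, k3, s, hs, f⟩ := h'
  have hB : 0 ≤ B := (abs_nonneg _).trans h0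
  have hB' : 0 ≤ B' := (abs_nonneg _).trans k0
  have key : ∀ {x y : ℝ} (n : ℕ), |x| ≤ B → |y| ≤ B' →
      -(B * B') ≤ t ^ n * (x * y) ∧ t ^ n * (x * y) ≤ B * B' := by
    intro x y n hx hy
    rw [← abs_le, abs_mul, abs_mul, abs_of_nonneg (pow_nonneg ht n)]
    calc t ^ n * (|x| * |y|) ≤ 1 * (B * B') := by
          gcongr
          exact pow_le_one₀ ht ht1
      _ = B * B' := one_mul _
  have hBB : 0 ≤ B * B' := mul_nonneg hB hB'
  refine ⟨?_, ?_, ?_, ?_, a₁ * b₃ + a₂ * b₂ + a₃ * b₁ + t * (a₂ * b₃ + a₃ * b₂) + t ^ 2 * (a₃ * b₃)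
    + r * (b₀ + t * b₁ + t ^ 2 * b₂ + t ^ 3 * b₃) + (a₀ + t * a₁ + t ^ 2 * a₂ + t ^ 3 * a₃) * s
    + t ^ 4 * (r * s), ?_, ?_⟩
  · rw [abs_le]; constructor <;> linarith [key 0 h0 k0]
  · rw [abs_le]; constructor <;> linarith [key 0 h0 k1, key 0 h1 k0]
  · rw [abs_le]; constructor <;> linarith [key 0 h0 k2, key 0 h1 k1, key 0 h2 k0]
  · rw [abs_le]
    constructor <;> linarith [key 0 h0 k3, key 0 h1 k2, key 0 h2 k1, key 0 h3 k0]
  · rw [abs_le]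
    constructor <;>
    linarith [key 0 h1 k3, key 0 h2 k2, key 0 h3 k1, key 1 h2 k3, key 1 h3 k2, key 2 h3 k3,
      key 0 hr k0, key 1 hr k1, key 2 hr k2, key 3 hr k3, key 0 h0 hs, key 1 h1 hs, key 2 h2 hs,
      key 3 h3 hs, key 4 hr hs]
  · rw [e, f]; ring

end Jet

lemma exp_neg_taylor (w : ℝ) :
    |exp (-w) - (1 + w * (-1 + w * (1 / 2 + w * (-1 / 6))))| ≤ 4 * w ^ 4 * max 1 (exp (-w)) := by
  have hs : ∀ z : ℝ, ∑ m ∈ Finset.range 4, z ^ m / (m.factorial : ℝ)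
      = 1 + z + z ^ 2 / 2 + z ^ 3 / 6 := by
    intro z; simp [Finset.sum_range_succ, Nat.factorial]
  have hw4 : 0 ≤ w ^ 4 := by positivity
  have hm1 : 1 ≤ max 1 (exp (-w)) := le_max_left _ _
  have hpoly : 1 + w * (-1 + w * (1 / 2 + w * (-1 / 6)))
      = 1 + (-w) + (-w) ^ 2 / 2 + (-w) ^ 3 / 6 := by ring
  rcases le_total w 0 with hw | hw
  · have h := Complex.norm_exp_sub_sum_le_norm_mul_exp ((-w : ℝ) : ℂ) 4
    have h2 : Complex.exp ((-w : ℝ) : ℂ) - ∑ m ∈ Finset.range 4, ((-w : ℝ) : ℂ) ^ m / (m.factorial : ℂ)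
        = ((exp (-w) - ∑ m ∈ Finset.range 4, (-w) ^ m / (m.factorial : ℝ) : ℝ) : ℂ) := by
      push_cast; rfl
    rw [h2, Complex.norm_real, Complex.norm_real, hs, Real.norm_eq_abs, Real.norm_eq_abs,
      abs_of_nonneg (by linarith : 0 ≤ -w)] at h
    rw [hpoly]
    refine h.trans ?_
    have : exp (-w) ≤ max 1 (exp (-w)) := le_max_right _ _
    have e : (-w) ^ 4 = w ^ 4 := by ring
    rw [e]
    have : w ^ 4 * exp (-w) ≤ w ^ 4 * max 1 (exp (-w)) := by gcongr
    nlinarith [mul_nonneg hw4 (zero_le_one.trans hm1)]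
  · have hB : |exp (-w) - (1 + (-w) + (-w) ^ 2 / 2 + (-w) ^ 3 / 6)| ≤ 4 * w ^ 4 := by
      rcases le_total w 1 with hw1 | hw1
      · have h := Real.exp_bound (x := -w) (by rw [abs_neg, abs_of_nonneg hw]; exact hw1)
          (n := 4) (by norm_num)
        rw [hs, abs_neg, abs_of_nonneg hw] at h
        refine h.trans ?_
        rw [mul_comm]
        gcongr
        norm_num [Nat.factorial]
      · have e1 : exp (-w) ≤ 1 := by rw [exp_le_one_iff]; linarith
        have e0 := (exp_pos (-w)).le
        have a1 : w ≤ w ^ 4 := le_self_pow₀ hw1 (by norm_num)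
        have a2 : w ^ 2 ≤ w ^ 4 := pow_le_pow_right₀ hw1 (by norm_num)
        have a3 : w ^ 3 ≤ w ^ 4 := pow_le_pow_right₀ hw1 (by norm_num)
        have b2 : 0 ≤ w ^ 2 := by positivity
        have b3 : 0 ≤ w ^ 3 := by positivity
        have e2 : (-w) ^ 2 = w ^ 2 := by ring
        have e3 : (-w) ^ 3 = -w ^ 3 := by ring
        rw [abs_le, e2, e3]
        constructor <;> linarith
    rw [hpoly]
    refine hB.trans ?_
    nlinarith

/-- Expansion of `e^{-w} f` to third order in `t`, when `w = O(t)`; the remainder is controlled by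
the fifth power of a common bound of all coefficients. -/
lemma exp_mul_expansion : ∃ K : ℝ, 0 < K ∧ ∀ t B w f p q r f₀ f₁ f₂ f₃ : ℝ, 0 < t → t ≤ 1 → 1 ≤ B →
    Jet t B w 0 p q r → Jet t B f f₀ f₁ f₂ f₃ →
    |exp (-w) * f - (f₀ + t * (f₁ - p * f₀) + t ^ 2 * (f₂ - p * f₁ + (p ^ 2 / 2 - q) * f₀)
      + t ^ 3 * (f₃ - p * f₂ + (p ^ 2 / 2 - q) * f₁ + (-r + p * q - p ^ 3 / 6) * f₀))|
      ≤ K * B ^ 5 * t ^ 4 * max 1 (exp (-w)) := by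
  refine ⟨10 ^ 7, by norm_num, ?_⟩
  intro t B w f p q r f₀ f₁ f₂ f₃ ht ht1 hB hw hf
  have c : ∀ a : ℝ, |a| ≤ 1 → Jet t B a a 0 0 0 := fun a ha => Jet.const (ha.trans hB)
  have hB2 : B ≤ B ^ 2 := le_self_pow₀ hB (by norm_num)
  have hB3 : B ≤ B ^ 3 := le_self_pow₀ hB (by norm_num)
  have hB4 : B ≤ B ^ 4 := le_self_pow₀ hB (by norm_num)
  have J1 : Jet t (16 * B ^ 2) _ _ _ _ _ :=
    ((c (1 / 2) (by norm_num [abs_le])).add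
      (hw.mul ht.le ht1 (c (-1 / 6) (by norm_num [abs_le])))).mono (by nlinarith)
  have J2 : Jet t (241 * B ^ 3) _ _ _ _ _ :=
    ((c (-1) (by norm_num)).add (hw.mul ht.le ht1 J1)).mono (by nlinarith)
  have J3 : Jet t (3616 * B ^ 4) _ _ _ _ _ :=
    ((c 1 (by norm_num)).add (hw.mul ht.le ht1 J2)).mono (by nlinarith)
  obtain ⟨-, -, -, -, R, hR, eR⟩ := J3.mul ht.le ht1 hf
  have hE := exp_neg_taylor w
  set G := 1 + w * (-1 + w * (1 / 2 + w * (-1 / 6))) with hG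
  set m := max 1 (exp (-w)) with hm
  have hm1 : 1 ≤ m := le_max_left _ _
  have hB0 : 0 ≤ B := zero_le_one.trans hB
  have hw4 : w ^ 4 ≤ 256 * B ^ 4 * t ^ 4 := by
    obtain ⟨-, h1, h2, h3, s, hs, e⟩ := hw
    have hwa : |w| ≤ t * (4 * B) := by
      have ew : w = t * (p + t * q + t ^ 2 * r + t ^ 3 * s) := by rw [e]; ring
      have key : ∀ {x : ℝ} (n : ℕ), |x| ≤ B → |t ^ n * x| ≤ B := by
        intro x n hx
        rw [abs_mul, abs_of_nonneg (pow_nonneg ht.le n)]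
        exact (mul_le_of_le_one_left (abs_nonneg _) (pow_le_one₀ ht.le ht1)).trans hx
      rw [ew, abs_mul, abs_of_pos ht]
      gcongr
      have k1 := abs_le.1 (key 1 h2)
      have k2 := abs_le.1 (key 2 h3)
      have k3 := abs_le.1 (key 3 hs)
      have k0 := abs_le.1 h1
      rw [pow_one] at k1
      rw [abs_le]; constructor <;> linarith
    calc w ^ 4 = |w| ^ 4 := by rw [pow_abs, abs_of_nonneg (by positivity)]
      _ ≤ (t * (4 * B)) ^ 4 := by gcongr
      _ = _ := by ring
  have hfB : |f| ≤ 5 * B := by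
    obtain ⟨h0, h1, h2, h3, s, hs, e⟩ := hf
    have key : ∀ {x : ℝ} (n : ℕ), |x| ≤ B → |t ^ n * x| ≤ B := by
      intro x n hx
      rw [abs_mul, abs_of_nonneg (pow_nonneg ht.le n)]
      exact (mul_le_of_le_one_left (abs_nonneg _) (pow_le_one₀ ht.le ht1)).trans hx
    have k1 := abs_le.1 (key 1 h1)
    have k2 := abs_le.1 (key 2 h2)
    have k3 := abs_le.1 (key 3 h3)
    have k4 := abs_le.1 (key 4 hs)
    have k0 := abs_le.1 h0
    rw [pow_one] at k1
    rw [e, abs_le]; constructor <;> linarith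
  have split : exp (-w) * f - (f₀ + t * (f₁ - p * f₀)
      + t ^ 2 * (f₂ - p * f₁ + (p ^ 2 / 2 - q) * f₀)
      + t ^ 3 * (f₃ - p * f₂ + (p ^ 2 / 2 - q) * f₁ + (-r + p * q - p ^ 3 / 6) * f₀))
      = (exp (-w) - G) * f + t ^ 4 * R := by
    have : exp (-w) * f = (exp (-w) - G) * f + G * f := by ring
    rw [this, eR]; ring
  rw [split]
  have hx : 0 ≤ B ^ 5 * t ^ 4 := by positivity
  calc |(exp (-w) - G) * f + t ^ 4 * R| ≤ |exp (-w) - G| * |f| + t ^ 4 * |R| := by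
        refine (abs_add_le _ _).trans_eq ?_
        rw [abs_mul, abs_mul, abs_of_nonneg (by positivity : 0 ≤ t ^ 4)]
    _ ≤ (4 * (256 * B ^ 4 * t ^ 4) * m) * (5 * B) + t ^ 4 * (15 * (3616 * B ^ 4 * B)) := by
        gcongr
        exact hE.trans (by gcongr)
    _ = 5120 * (B ^ 5 * t ^ 4 * m) + 54240 * (B ^ 5 * t ^ 4) := by ring
    _ ≤ 10 ^ 7 * B ^ 5 * t ^ 4 * m := by nlinarith

/-! ### The Hessian at the minimum -/

section Hessian

variable {d : ℕ} {U : Euc d → ℝ} {lam : ℝ}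

lemma dform_neg (k : ℕ) (f : Euc d → ℝ) (x : Euc d) : dform k f (-x) = (-1) ^ k * dform k f x := by
  have h := (iteratedFDeriv ℝ k f 0).map_smul_univ (fun _ => (-1 : ℝ)) (fun _ => x)
  simpa [dform] using h

lemma dform_zero (f : Euc d → ℝ) (x : Euc d) : dform 0 f x = f 0 := by
  simp [dform]

lemma dform_one_eq_zero (hU0 : U 0 = 0) (hlam : 0 < lam) (hlow : ∀ z, lam / 2 * ‖z‖ ^ 2 ≤ U z)
    (x : Euc d) : dform 1 U x = 0 := by
  have hmin : IsLocalMin U 0 := Filter.Eventually.of_forall fun z => by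
    rw [hU0]; exact le_trans (by positivity) (hlow z)
  simp [dform, hmin.fderiv_eq_zero]

lemma dform_two_eq_qf (x : Euc d) : dform 2 U x = qf (hess U 0) x := by
  rw [dform_two]
  simp only [qf, hess, Matrix.of_apply, mul_assoc]

/-- The Taylor expansion of `U(t x) / t²`: the quadratic part is independent of `t`, and there are
no lower-order terms because `0` is a minimum with `U 0 = 0`. -/
lemma potential_expansion (hU : ContDiff ℝ (6 : ℕ) U) (hU0 : U 0 = 0) (hlam : 0 < lam)
    (hlow : ∀ z, lam / 2 * ‖z‖ ^ 2 ≤ U z) {M : ℝ} (hM : ∀ x, Dnorm 6 U x ≤ M) (x : Euc d) {t : ℝ}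
    (ht : 0 < t) :
    ∃ s, |s| ≤ M * ‖x‖ ^ 6 ∧ U (t • x) / t ^ 2 = qf (hess U 0) x / 2
      + (0 + t * (dform 3 U x / 6) + t ^ 2 * (dform 4 U x / 24) + t ^ 3 * (dform 5 U x / 120)
        + t ^ 4 * s) := by
  obtain ⟨s, hs, e⟩ := taylor_ray (n := 5) hU hM x ht
  refine ⟨s, hs, ?_⟩
  rw [e]
  simp only [Finset.sum_range_succ, Finset.sum_range_zero, dform_zero, hU0,
    dform_one_eq_zero hU0 hlam hlow, dform_two_eq_qf]
  norm_num [Nat.factorial]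
  field_simp
  ring

lemma hess_lower (hU : ContDiff ℝ (6 : ℕ) U) (hU0 : U 0 = 0) (hlam : 0 < lam)
    (hlow : ∀ z, lam / 2 * ‖z‖ ^ 2 ≤ U z) {M : ℝ} (hM : ∀ x, Dnorm 6 U x ≤ M) (x : Euc d) :
    lam * ‖x‖ ^ 2 ≤ qf (hess U 0) x := by
  set a := dform 3 U x / 6
  set b := dform 4 U x / 24
  set c := dform 5 U x / 120
  set m := M * ‖x‖ ^ 6
  have hev : ∀ᶠ t in nhdsWithin (0 : ℝ) (Set.Ioi 0), lam / 2 * ‖x‖ ^ 2 ≤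
      qf (hess U 0) x / 2 + (0 + t * a + t ^ 2 * b + t ^ 3 * c + t ^ 4 * m) := by
    filter_upwards [self_mem_nhdsWithin] with t ht
    have ht : 0 < t := ht
    obtain ⟨s, hs, e⟩ := potential_expansion hU hU0 hlam hlow hM x ht
    have h1 : lam / 2 * ‖x‖ ^ 2 ≤ U (t • x) / t ^ 2 := by
      rw [le_div_iff₀ (by positivity)]
      have := hlow (t • x)
      rw [norm_smul, Real.norm_of_nonneg ht.le] at this
      linarith
    rw [e] at h1
    have : t ^ 4 * s ≤ t ^ 4 * m := by
      gcongr; exact (le_abs_self s).trans hs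
    simp only [a, b, c]
    linarith
  have hcont : Filter.Tendsto (fun t : ℝ => qf (hess U 0) x / 2
      + (0 + t * a + t ^ 2 * b + t ^ 3 * c + t ^ 4 * m)) (nhdsWithin (0 : ℝ) (Set.Ioi 0))
      (nhds (qf (hess U 0) x / 2)) := by
    have hc : Continuous fun t : ℝ => qf (hess U 0) x / 2
      + (0 + t * a + t ^ 2 * b + t ^ 3 * c + t ^ 4 * m) := by fun_prop
    have := hc.tendsto 0
    simp only [zero_mul, ne_eq, OfNat.ofNat_ne_zero, not_false_eq_true, zero_pow, add_zero] at this
    exact this.mono_left nhdsWithin_le_nhds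
  linarith [ge_of_tendsto hcont hev]

lemma hess_symm (hU : ContDiff ℝ (6 : ℕ) U) (i j : Fin d) : hess U 0 i j = hess U 0 j i :=
  pd_swap_head hU (by norm_num) 0 i j ![]

lemma hess_posDef (hlam : 0 < lam) (hs : ∀ i j, hess U 0 i j = hess U 0 j i)
    (hl : ∀ x, lam * ‖x‖ ^ 2 ≤ qf (hess U 0) x) : (hess U 0).PosDef := by
  refine Matrix.PosDef.of_dotProduct_mulVec_pos (Matrix.IsHermitian.ext fun i j => by simp [hs i j])
    fun v hv => ?_
  have h := hl (WithLp.toLp 2 v)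
  have hv' : 0 < ‖(WithLp.toLp 2 v : Euc d)‖ := by
    rw [norm_pos_iff]
    simpa using hv
  have e : star v ⬝ᵥ (hess U 0).mulVec v = qf (hess U 0) (WithLp.toLp 2 v) := by
    simp only [qf, dotProduct, Matrix.mulVec, Finset.mul_sum, star_trivial]
    refine Finset.sum_congr rfl fun i _ => Finset.sum_congr rfl fun j _ => ?_
    ring
  rw [e]
  exact lt_of_lt_of_le (by positivity) h

lemma gaussPair_hess (hlam : 0 < lam) (hs : ∀ i j, hess U 0 i j = hess U 0 j i)
    (hl : ∀ x, lam * ‖x‖ ^ 2 ≤ qf (hess U 0) x) :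
    GaussPair (hess U 0) (hess U 0)⁻¹ lam where
  pos := hlam
  lower := hl
  symmH := hs
  symmC i j := by
    have hT : (hess U 0).transpose = hess U 0 := by ext i j; simp [hs i j]
    have h := Matrix.transpose_nonsing_inv (hess U 0)
    rw [hT] at h
    exact congrFun (congrFun h j) i
  mul_eq := Matrix.mul_nonsing_inv _ (hess_posDef hlam hs hl).det_pos.ne'.isUnit

end Hessian

/-! ### Expansion of the rescaled integrand -/

section Expansion

variable {d : ℕ} {U F : Euc d → ℝ} {lam : ℝ}

/-- The coefficient of `t` in the expansion of `e^{-U(tx)/t²} F(tx)` divided by the Gaussian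
weight. -/
def coeff1 (U F : Euc d → ℝ) (x : Euc d) : ℝ := dform 1 F x + (-(F 0 / 6)) * dform 3 U x

/-- The coefficient of `t³` in the expansion of `e^{-U(tx)/t²} F(tx)` divided by the Gaussian
weight. -/
def coeff3 (U F : Euc d → ℝ) (x : Euc d) : ℝ :=
  1 / 6 * dform 3 F x + (-(1 / 12)) * (dform 3 U x * dform 2 F x)
    + (1 / 72 * (dform 3 U x * (dform 3 U x * dform 1 F x))
      + (-(1 / 24)) * (dform 4 U x * dform 1 F x))
    + ((-(F 0 / 120)) * dform 5 U x + F 0 / 144 * (dform 3 U x * dform 4 U x)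
      + (-(F 0 / 1296)) * (dform 3 U x * (dform 3 U x * dform 3 U x)))

lemma polyGrowth_coeff1 : PolyGrowth (coeff1 U F) :=
  (PolyGrowth.dform 1 F).add ((PolyGrowth.const _).mul (PolyGrowth.dform 3 U))

lemma polyGrowth_coeff2 : PolyGrowth (coeff2 U F) :=
  (((PolyGrowth.const _).mul (PolyGrowth.dform 2 F)).add
    ((PolyGrowth.const _).mul ((PolyGrowth.dform 3 U).mul (PolyGrowth.dform 1 F)))).add
  (((PolyGrowth.const _).mul (polyGrowth_dform3_sq U)).add
    ((PolyGrowth.const _).mul (PolyGrowth.dform 4 U)))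

lemma polyGrowth_coeff3 : PolyGrowth (coeff3 U F) := by
  have c := fun a => PolyGrowth.const (d := d) a
  have u := fun k => PolyGrowth.dform k U
  have f := fun k => PolyGrowth.dform k F
  exact ((((c _).mul (f 3)).add ((c _).mul ((u 3).mul (f 2)))).add
    (((c _).mul ((u 3).mul ((u 3).mul (f 1)))).add ((c _).mul ((u 4).mul (f 1))))).add
    ((((c _).mul (u 5)).add ((c _).mul ((u 3).mul (u 4)))).add
      ((c _).mul ((u 3).mul ((u 3).mul (u 3)))))

lemma gE_odd {H : Matrix (Fin d) (Fin d) ℝ} {g : Euc d → ℝ} (hg : ∀ x, g (-x) = -g x) :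
    gE H g = 0 := by
  have h := integral_neg_eq_self (fun x : Euc d => g x * gw H x) volume
  have hw : ∀ x : Euc d, gw H (-x) = gw H x := fun x => by simp [gw, qf]
  simp only [hg, hw, neg_mul, integral_neg] at h
  unfold gE
  linarith

lemma coeff1_neg (x : Euc d) : coeff1 U F (-x) = -coeff1 U F x := by
  simp only [coeff1, dform_neg]; ring

lemma coeff3_neg (x : Euc d) : coeff3 U F (-x) = -coeff3 U F x := by
  simp only [coeff3, dform_neg]; ring

lemma rescaled_exp_le (hlow : ∀ z, lam / 2 * ‖z‖ ^ 2 ≤ U z) (x : Euc d) {t : ℝ} (ht : 0 < t) :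
    exp (-(U (t • x) / t ^ 2)) ≤ exp (-(lam / 2) * ‖x‖ ^ 2) := by
  gcongr
  have h : lam / 2 * ‖x‖ ^ 2 ≤ U (t • x) / t ^ 2 := by
    rw [le_div_iff₀ (by positivity)]
    have := hlow (t • x)
    rw [norm_smul, Real.norm_of_nonneg ht.le] at this
    linarith
  linarith

/-- Both the Gaussian weight and the rescaled Boltzmann weight are dominated by
`exp (-(lam / 2) * ‖x‖ ^ 2)`, which turns the scalar expansion into an integrable remainder. -/
lemma integrand_expansion (hlam : 0 < lam) (hU : ContDiff ℝ (6 : ℕ) U) (hU0 : U 0 = 0)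
    (hlow : ∀ z, lam / 2 * ‖z‖ ^ 2 ≤ U z) {M : ℝ} (hM : ∀ x, Dnorm 6 U x ≤ M)
    (hF : ContDiff ℝ (4 : ℕ) F) {M' : ℝ} (hM' : ∀ x, Dnorm 4 F x ≤ M')
    (hl : ∀ x, lam * ‖x‖ ^ 2 ≤ qf (hess U 0) x) :
    ∃ K : ℝ, 0 ≤ K ∧ ∀ (x : Euc d) (t : ℝ), 0 < t → t ≤ 1 →
      |exp (-(U (t • x) / t ^ 2)) * F (t • x) - (F 0 + t * coeff1 U F x + t ^ 2 * coeff2 U F x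
        + t ^ 3 * coeff3 U F x) * gw (hess U 0) x|
      ≤ t ^ 4 * (K * ((1 + ‖x‖) ^ 30 * exp (-(lam / 2) * ‖x‖ ^ 2))) := by
  obtain ⟨K, hK, hexp⟩ := exp_mul_expansion
  have nn : ∀ k (f : Euc d → ℝ) x, 0 ≤ Dnorm k f x :=
    fun k f x => Finset.sum_nonneg fun _ _ => abs_nonneg _
  have u3 := nn 3 U 0
  have u4 := nn 4 U 0
  have u5 := nn 5 U 0
  have u6 := (nn 6 U 0).trans (hM 0)
  have f1 := nn 1 F 0
  have f2 := nn 2 F 0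
  have f3 := nn 3 F 0
  have f4 := (nn 4 F 0).trans (hM' 0)
  have f0 := abs_nonneg (F 0)
  obtain ⟨L, hL⟩ : ∃ L, L = 1 + Dnorm 3 U 0 + Dnorm 4 U 0 + Dnorm 5 U 0 + M + |F 0| + Dnorm 1 F 0
    + Dnorm 2 F 0 + Dnorm 3 F 0 + M' := ⟨_, rfl⟩
  have hL1 : 1 ≤ L := by linarith
  refine ⟨K * L ^ 5, by positivity, fun x t ht ht1 => ?_⟩
  have hx1 : 1 ≤ 1 + ‖x‖ := by linarith [norm_nonneg x]
  set B := L * (1 + ‖x‖) ^ 6 with hBdef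
  have hB1 : 1 ≤ B := by
    have : (1 : ℝ) ≤ (1 + ‖x‖) ^ 6 := one_le_pow₀ hx1
    nlinarith
  have hmon : ∀ {a A : ℝ} (k : ℕ), k ≤ 6 → 0 ≤ A → A ≤ L → |a| ≤ A * ‖x‖ ^ k → |a| ≤ B := by
    intro a A k hk hA hAL ha
    refine ha.trans ?_
    calc A * ‖x‖ ^ k ≤ L * (1 + ‖x‖) ^ k := by gcongr; linarith
      _ ≤ B := by
        rw [hBdef]
        gcongr
  have hdf : ∀ (k : ℕ) (f : Euc d → ℝ) (n : ℝ), k ≤ 6 → Dnorm k f 0 ≤ L → 1 ≤ n →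
      |dform k f x / n| ≤ B := by
    intro k f n hk hA hn
    rw [abs_div, abs_of_pos (by linarith : 0 < n)]
    exact (div_le_self (abs_nonneg _) hn).trans
      (hmon k hk (nn k f 0) hA (abs_iteratedFDeriv_diag_le k f 0 x))
  obtain ⟨s, hs, es⟩ := potential_expansion hU hU0 hlam hlow hM x ht
  obtain ⟨s', hs', es'⟩ := taylor_ray (n := 3) hF hM' x ht
  simp only [Finset.sum_range_succ, Finset.sum_range_zero, dform_zero] at es'
  set w := U (t • x) / t ^ 2 - qf (hess U 0) x / 2 with hw
  have Jw : Jet t B w 0 (dform 3 U x / 6) (dform 4 U x / 24) (dform 5 U x / 120) := by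
    refine ⟨by rw [abs_zero]; linarith, hdf 3 U 6 (by norm_num) (by linarith) (by norm_num),
      hdf 4 U 24 (by norm_num) (by linarith) (by norm_num),
      hdf 5 U 120 (by norm_num) (by linarith) (by norm_num), s,
      hmon 6 le_rfl u6 (by linarith) hs, ?_⟩
    rw [hw, es]; ring
  have JF : Jet t B (F (t • x)) (F 0) (dform 1 F x / 1) (dform 2 F x / 2) (dform 3 F x / 6) := by
    refine ⟨hmon (A := |F 0|) 0 (by norm_num) f0 (by linarith) (by simp),
      hdf 1 F 1 (by norm_num) (by linarith) (by norm_num),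
      hdf 2 F 2 (by norm_num) (by linarith) (by norm_num),
      hdf 3 F 6 (by norm_num) (by linarith) (by norm_num), s',
      hmon 4 (by norm_num) f4 (by linarith) hs', ?_⟩
    rw [es']
    norm_num [Nat.factorial]
    ring
  have h := hexp t B w _ _ _ _ _ _ _ _ ht ht1 hB1 Jw JF
  have hexpw : exp (-(U (t • x) / t ^ 2)) = exp (-w) * gw (hess U 0) x := by
    rw [gw, ← exp_add, hw]; congr 1; ring
  have hg0 : 0 < gw (hess U 0) x := exp_pos _
  have hmax : max 1 (exp (-w)) * gw (hess U 0) x ≤ exp (-(lam / 2) * ‖x‖ ^ 2) := by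
    rw [max_mul_of_nonneg _ _ hg0.le, one_mul, ← hexpw]
    exact max_le (gw_le hl x) (rescaled_exp_le hlow x ht)
  have split : exp (-(U (t • x) / t ^ 2)) * F (t • x) - (F 0 + t * coeff1 U F x
      + t ^ 2 * coeff2 U F x + t ^ 3 * coeff3 U F x) * gw (hess U 0) x
      = (exp (-w) * F (t • x) - (F 0 + t * (dform 1 F x / 1 - dform 3 U x / 6 * F 0)
        + t ^ 2 * (dform 2 F x / 2 - dform 3 U x / 6 * (dform 1 F x / 1)
          + ((dform 3 U x / 6) ^ 2 / 2 - dform 4 U x / 24) * F 0)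
        + t ^ 3 * (dform 3 F x / 6 - dform 3 U x / 6 * (dform 2 F x / 2)
          + ((dform 3 U x / 6) ^ 2 / 2 - dform 4 U x / 24) * (dform 1 F x / 1)
          + (-(dform 5 U x / 120) + dform 3 U x / 6 * (dform 4 U x / 24)
            - (dform 3 U x / 6) ^ 3 / 6) * F 0))) * gw (hess U 0) x := by
    rw [hexpw, coeff1, coeff2, coeff3]; ring
  rw [split, abs_mul, abs_of_pos hg0]
  calc _ ≤ K * B ^ 5 * t ^ 4 * max 1 (exp (-w)) * gw (hess U 0) x :=
        mul_le_mul_of_nonneg_right h hg0.le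
    _ = K * B ^ 5 * t ^ 4 * (max 1 (exp (-w)) * gw (hess U 0) x) := by ring
    _ ≤ K * B ^ 5 * t ^ 4 * exp (-(lam / 2) * ‖x‖ ^ 2) := by gcongr
    _ = _ := by rw [hBdef]; ring

lemma integrable_rescaled (hlam : 0 < lam) (hU : Continuous U) (hF : Continuous F)
    (hlow : ∀ z, lam / 2 * ‖z‖ ^ 2 ≤ U z) {A : ℝ} (hA : ∀ x, |F x| ≤ A) {t : ℝ} (ht : 0 < t) :
    Integrable (fun x : Euc d => exp (-(U (t • x) / t ^ 2)) * F (t • x)) ∧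
      |∫ x, exp (-(U (t • x) / t ^ 2)) * F (t • x)|
        ≤ A * ∫ x : Euc d, exp (-(lam / 2) * ‖x‖ ^ 2) := by
  have hb : ∀ x : Euc d, ‖exp (-(U (t • x) / t ^ 2)) * F (t • x)‖
      ≤ A * exp (-(lam / 2) * ‖x‖ ^ 2) := fun x => by
    rw [norm_mul, Real.norm_of_nonneg (exp_pos _).le, mul_comm A]
    exact mul_le_mul (rescaled_exp_le hlow x ht) (hA _) (norm_nonneg _) (exp_pos _).le
  have hi := (integrable_gauss (d := d) (half_pos hlam)).const_mul A
  have hc : Continuous fun x : Euc d => exp (-(U (t • x) / t ^ 2)) * F (t • x) := by fun_prop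
  refine ⟨hi.mono' hc.aestronglyMeasurable (Filter.Eventually.of_forall hb), ?_⟩
  rw [← integral_const_mul]
  exact norm_integral_le_of_norm_le hi (Filter.Eventually.of_forall hb)

/-- The parabolic rescaling `z = √ε x` of the Laplace integral. -/
lemma integral_rescale (U F : Euc d → ℝ) {ε : ℝ} (hε : 0 < ε) :
    ∫ z, (2 * π * ε) ^ (-(d : ℝ) / 2) * exp (-U z / ε) * F z
      = (2 * π) ^ (-(d : ℝ) / 2) * ∫ x, exp (-(U (√ε • x) / √ε ^ 2)) * F (√ε • x) := by
  have hs : 0 < √ε := sqrt_pos.2 hε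
  have h := Measure.integral_comp_smul (volume : Measure (Euc d))
    (fun z => exp (-(U z / ε)) * F z) √ε
  rw [sq_sqrt hε.le, h, finrank_euclideanSpace_fin, abs_of_pos (by positivity), smul_eq_mul,
    ← integral_const_mul, ← integral_const_mul]
  congr 1
  ext z
  have e : (2 * π * ε) ^ (-(d : ℝ) / 2) = (2 * π) ^ (-(d : ℝ) / 2) * (√ε ^ d)⁻¹ := by
    rw [mul_rpow (by positivity) hε.le]
    congr 1
    rw [sqrt_eq_rpow, ← rpow_natCast, ← rpow_mul hε.le, ← rpow_neg hε.le]
    congr 1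
    ring
  rw [e, neg_div ε (U z)]
  ring

end Expansion

/-! ### The Laplace expansion -/

/-- **First-order Laplace expansion for a translation-invariant cost** (Section 5.1 of
the paper): for `U` with a nondegenerate global minimum at `0` and `F ∈ W^{4,∞}(ℝ^d)`,
`(2πε)^{-d/2} ∫ e^{-U(z)/ε} F(z) dz` equals the first-order Laplace expansion at `0`
up to an error `≤ C ε²`. -/
theorem laplace_translation_invariant {d : ℕ} (hd : 1 ≤ d)
    (lam : ℝ) (hlam : 0 < lam) (U F : Euc d → ℝ)
    (hU : ContDiff ℝ 6 U) (hU0 : U 0 = 0)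
    (hlow : ∀ z, lam / 2 * ‖z‖ ^ 2 ≤ U z)
    (hUbdd : ∀ k : ℕ, 3 ≤ k → k ≤ 6 → ∃ M : ℝ, ∀ x, Dnorm k U x ≤ M)
    (hF : ContDiff ℝ 4 F)
    (hFbdd : ∀ k : ℕ, k ≤ 4 → ∃ M : ℝ, ∀ x, Dnorm k F x ≤ M) :
    ∃ C : ℝ, 0 < C ∧ ∀ ε : ℝ, 0 < ε →
      |(∫ z, (2 * Real.pi * ε) ^ (-(d : ℝ) / 2) * Real.exp (-U z / ε) * F z) -
          (Real.sqrt (hess U 0).det)⁻¹ * (F 0 + ε * lap1 U F 0)|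
        ≤ C * ε ^ 2 := by
  have hU6 : ContDiff ℝ (6 : ℕ) U := by exact_mod_cast hU
  have hF4 : ContDiff ℝ (4 : ℕ) F := by exact_mod_cast hF
  obtain ⟨M, hM⟩ := hUbdd 6 (by norm_num) le_rfl
  obtain ⟨M', hM'⟩ := hFbdd 4 le_rfl
  obtain ⟨A, hA⟩ := hFbdd 0 (by norm_num)
  have hA' : ∀ x, |F x| ≤ A := fun x => by
    have h := (abs_iteratedFDeriv_diag_le 0 F x x).trans
      (mul_le_mul_of_nonneg_right (hA x) (by positivity))
    simpa using h
  have hl := hess_lower hU6 hU0 hlam hlow hM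
  have hs := hess_symm hU6
  have hG := gaussPair_hess hlam hs hl
  have hdet := gauss_integral (hess_posDef hlam hs hl)
  obtain ⟨K, hK, hexp⟩ := integrand_expansion hlam hU6 hU0 hlow hM hF4 hM' hl
  have hc2 := gE_coeff2 (F := F) hU6 hG
  -- `c` normalises the Gaussian, whose total mass is `D / c`.
  set c := (2 * π) ^ (-(d : ℝ) / 2) with hc
  have hc0 : 0 < c := by positivity
  set D := (√(hess U 0).det)⁻¹ with hD
  have hD0 : 0 ≤ D := by positivity
  have hgE : c * gE (hess U 0) (fun _ => 1) = D := by
    simp only [gE, one_mul]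
    rw [hdet, ← mul_assoc, hc, ← rpow_add (by positivity)]
    rw [show -(d : ℝ) / 2 + (d : ℝ) / 2 = 0 by ring, rpow_zero, one_mul]
  set R := ∫ x : Euc d, (1 + ‖x‖) ^ 30 * exp (-(lam / 2) * ‖x‖ ^ 2) with hR
  have hR0 : 0 ≤ R := integral_nonneg fun x => by positivity
  set Q := ∫ x : Euc d, exp (-(lam / 2) * ‖x‖ ^ 2) with hQ
  have hQ0 : 0 ≤ Q := integral_nonneg fun x => (exp_pos _).le
  have hA0 : 0 ≤ A := (abs_nonneg _).trans (hA' 0)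
  refine ⟨c * (K * R) + (c * (A * Q) + D * (|F 0| + |lap1 U F 0|)) + 1, by positivity,
    fun ε hε => ?_⟩
  rw [integral_rescale U F hε]
  set t := √ε with ht
  have ht0 : 0 < t := sqrt_pos.2 hε
  have ht2 : t ^ 2 = ε := sq_sqrt hε.le
  obtain ⟨hint, hbound⟩ := integrable_rescaled hlam hU.continuous hF.continuous hlow hA' ht0
  set I := ∫ x, exp (-(U (t • x) / t ^ 2)) * F (t • x) with hI
  have hE2 : 0 ≤ ε ^ 2 := by positivity
  rcases le_total ε 1 with h1 | h1
  · have ht1 : t ≤ 1 := sqrt_le_one.2 h1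
    have p0 : PolyGrowth fun _ : Euc d => F 0 := PolyGrowth.const _
    have p1 := (PolyGrowth.const t).mul (polyGrowth_coeff1 (U := U) (F := F))
    have p2 := (PolyGrowth.const (t ^ 2)).mul (polyGrowth_coeff2 (U := U) (F := F))
    have p3 := (PolyGrowth.const (t ^ 3)).mul (polyGrowth_coeff3 (U := U) (F := F))
    have hmain : gE (hess U 0) (fun x => F 0 + t * coeff1 U F x + t ^ 2 * coeff2 U F x
        + t ^ 3 * coeff3 U F x) = (F 0 + ε * lap1 U F 0) * gE (hess U 0) (fun _ => 1) := by
      rw [hG.add ((p0.add p1).add p2) p3, hG.add (p0.add p1) p2, hG.add p0 p1,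
        GaussPair.const_mul, GaussPair.const_mul, GaussPair.const_mul, gE_odd coeff1_neg,
        gE_odd coeff3_neg, hc2, ht2]
      have := GaussPair.const_mul (H := hess U 0) (F 0) (fun _ => 1)
      simp only [mul_one] at this
      rw [this]
      ring
    have hdiff : |I - gE (hess U 0) (fun x => F 0 + t * coeff1 U F x + t ^ 2 * coeff2 U F x
        + t ^ 3 * coeff3 U F x)| ≤ t ^ 4 * (K * R) := by
      rw [hI, gE, ← integral_sub hint
        ((((p0.add p1).add p2).add p3).integrable hlam hl), hR, ← integral_const_mul,
        ← integral_const_mul, ← Real.norm_eq_abs]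
      refine norm_integral_le_of_norm_le
        (((integrable_poly_gauss (half_pos hlam) 30).const_mul K).const_mul _)
        (Filter.Eventually.of_forall fun x => ?_)
      exact hexp x t ht0 ht1
    rw [hmain] at hdiff
    have e : c * I - D * (F 0 + ε * lap1 U F 0)
        = c * (I - (F 0 + ε * lap1 U F 0) * gE (hess U 0) (fun _ => 1)) := by
      rw [← hgE]; ring
    rw [e, abs_mul, abs_of_pos hc0]
    have e4 : t ^ 4 = ε ^ 2 := by rw [← ht2]; ring
    rw [e4] at hdiff
    calc _ ≤ c * (ε ^ 2 * (K * R)) := by gcongr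
      _ = (c * (K * R)) * ε ^ 2 := by ring
      _ ≤ _ := by
        refine mul_le_mul_of_nonneg_right ?_ hE2
        have : 0 ≤ c * (A * Q) + D * (|F 0| + |lap1 U F 0|) := by positivity
        linarith
  -- For `ε ≥ 1` no cancellation is needed: every term is at most a constant times `ε ^ 2`.
  · have hε1 : ε ≤ ε ^ 2 := le_self_pow₀ h1 (by norm_num)
    have h12 : 1 ≤ ε ^ 2 := h1.trans hε1
    calc |c * I - D * (F 0 + ε * lap1 U F 0)|
        ≤ c * |I| + D * (|F 0| + ε * |lap1 U F 0|) := by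
          refine (abs_sub _ _).trans ?_
          rw [abs_mul, abs_mul, abs_of_pos hc0, abs_of_nonneg hD0]
          gcongr
          refine (abs_add_le _ _).trans_eq ?_
          rw [abs_mul, abs_of_pos hε]
      _ ≤ c * (A * Q * ε ^ 2) + D * (|F 0| * ε ^ 2 + ε ^ 2 * |lap1 U F 0|) := by
          gcongr
          · exact hbound.trans (le_mul_of_one_le_right (by positivity) h12)
          · exact le_mul_of_one_le_right (by positivity) h12
      _ = (c * (A * Q) + D * (|F 0| + |lap1 U F 0|)) * ε ^ 2 := by ring
      _ ≤ _ := by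
        refine mul_le_mul_of_nonneg_right ?_ hE2
        have : 0 ≤ c * (K * R) := by positivity
        linarith
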